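/- arXiv:1210.5325 — 3 statements merged into one kernel-verified Lean document; each statement's English description precedes it below -/
import Mathlib

section
/- Let G be an additive commutative group and R a G-graded commutative ring. Then R is noetherian as a G-graded ring (i.e., every ascending chain of graded ideals of R is eventually stationary) if and only if for every injective cogenerator E of GrMod^G(R), the countable direct sum E^(⊕ℕ) is an injective object of GrMod^G(R). -/
/-!
Common vocabulary: internally graded rings and modules, coarsening of gradings,
graded morphisms, and derived notions (injectivity, cogenerators, smallness, ...),
following Rohrer, "Coarsenings, injectives and Hom functors".
-/

open DirectSum

section Defs

variable {G H R : Type} [AddCommGroup G] [AddCommGroup H] [CommRing R]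

/-- The `ψ`-coarsening of a `G`-grading: `(ℳ_[ψ])_h = ⨁_{g ∈ ψ⁻¹(h)} ℳ_g`. -/
def coarsen {M : Type} [AddCommGroup M] (ψ : G →+ H) (ℳ : G → AddSubgroup M) (h : H) :
    AddSubgroup M :=
  ⨆ g ∈ ψ ⁻¹' {h}, ℳ g

/-- `(R, 𝒜)` is a `G`-graded commutative ring: the `𝒜 g` are additive subgroups whose
internal direct sum is `R`, and `𝒜 g * 𝒜 h ⊆ 𝒜 (g + h)`. -/
def IsGradedRing (𝒜 : G → AddSubgroup R) : Prop :=
  (1 : R) ∈ 𝒜 0 ∧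
  (∀ {g h : G} {a b : R}, a ∈ 𝒜 g → b ∈ 𝒜 h → a * b ∈ 𝒜 (g + h)) ∧
  (letI := Classical.decEq G; DirectSum.IsInternal 𝒜)

/-- `(M, ℳ)` is a `G`-graded module over the `G`-graded ring `(R, 𝒜)`. -/
def IsGradedModule {M : Type} [AddCommGroup M] [Module R M]
    (𝒜 : G → AddSubgroup R) (ℳ : G → AddSubgroup M) : Prop :=
  (∀ {g h : G} {r : R} {m : M}, r ∈ 𝒜 g → m ∈ ℳ h → r • m ∈ ℳ (g + h)) ∧
  (letI := Classical.decEq G; DirectSum.IsInternal ℳ)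

/-- A morphism of `G`-graded `R`-modules is an `R`-linear map respecting the gradings. -/
def IsGradedHom {M N : Type} [AddCommGroup M] [Module R M]
    [AddCommGroup N] [Module R N] (ℳ : G → AddSubgroup M) (𝒩 : G → AddSubgroup N)
    (f : M →ₗ[R] N) : Prop :=
  ∀ g : G, ∀ m ∈ ℳ g, f m ∈ 𝒩 g

/-- The grading of a direct sum of graded modules:
`(⨁_i N_i)_g` consists of the elements all of whose components lie in degree `g`. -/
def directSumGrading {ι : Type} {M : ι → Type}
    [∀ i, AddCommGroup (M i)] (ℳ : ∀ i, G → AddSubgroup (M i)) (g : G) :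
    AddSubgroup (⨁ i, M i) where
  carrier := {x | ∀ i, x i ∈ ℳ i g}
  zero_mem' := fun i => by simp only [DirectSum.zero_apply, ZeroMemClass.zero_mem]
  add_mem' := fun {x y} hx hy i => by
    rw [DirectSum.add_apply]; exact add_mem (hx i) (hy i)
  neg_mem' := fun {x} hx i => by
    rw [DFinsupp.neg_apply]; exact neg_mem (hx i)

/-- `(E, ℰ)` is an injective object of the category of `G`-graded `R`-modules:
every graded morphism into `E` extends along every injective graded morphism. -/
def IsInjectiveGradedModule (𝒜 : G → AddSubgroup R) {E : Type} [AddCommGroup E] [Module R E]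
    (ℰ : G → AddSubgroup E) : Prop :=
  ∀ (A B : Type) [AddCommGroup A] [Module R A] [AddCommGroup B] [Module R B],
    ∀ (𝒮A : G → AddSubgroup A) (𝒮B : G → AddSubgroup B),
      IsGradedModule 𝒜 𝒮A → IsGradedModule 𝒜 𝒮B →
      ∀ i : A →ₗ[R] B, Function.Injective i → IsGradedHom 𝒮A 𝒮B i →
      ∀ f : A →ₗ[R] E, IsGradedHom 𝒮A ℰ f →
      ∃ g : B →ₗ[R] E, IsGradedHom 𝒮B ℰ g ∧ g ∘ₗ i = f

/-- `(M, ℳ)` is a cogenerator of the category of `G`-graded `R`-modules: every nonzero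
graded morphism is detected by a graded morphism into `M`. -/
def IsCogenerator (𝒜 : G → AddSubgroup R) {M : Type} [AddCommGroup M] [Module R M]
    (ℳ : G → AddSubgroup M) : Prop :=
  ∀ (N N' : Type) [AddCommGroup N] [Module R N] [AddCommGroup N'] [Module R N'],
    ∀ (𝒩 : G → AddSubgroup N) (𝒩' : G → AddSubgroup N'),
      IsGradedModule 𝒜 𝒩 → IsGradedModule 𝒜 𝒩' →
      ∀ u : N →ₗ[R] N', IsGradedHom 𝒩 𝒩' u → u ≠ 0 →
      ∃ v : N' →ₗ[R] M, IsGradedHom 𝒩' ℳ v ∧ v ∘ₗ u ≠ 0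

/-- `M` is a small graded module: every graded morphism from `M` into a direct sum of
graded modules factors through a finite sub-sum. -/
def IsSmall (𝒜 : G → AddSubgroup R) {M : Type} [AddCommGroup M] [Module R M]
    (ℳ : G → AddSubgroup M) : Prop :=
  ∀ (ι : Type) (N : ι → Type) [∀ i, AddCommGroup (N i)] [∀ i, Module R (N i)],
    ∀ (𝒩 : ∀ i, G → AddSubgroup (N i)), (∀ i, IsGradedModule 𝒜 (𝒩 i)) →
      ∀ f : M →ₗ[R] ⨁ i, N i, IsGradedHom ℳ (directSumGrading 𝒩) f →
        ∃ s : Finset ι, ∀ (m : M) (i : ι), i ∉ s → f m i = 0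

/-- `M` is `P`-small: every graded morphism from `M` into a direct sum of copies of `P`
factors through a finite sub-sum. -/
def IsSmallWrt {P : Type} [AddCommGroup P] [Module R P] (𝒬 : G → AddSubgroup P)
    {M : Type} [AddCommGroup M] [Module R M] (ℳ : G → AddSubgroup M) : Prop :=
  ∀ (ι : Type) (f : M →ₗ[R] ⨁ (_ : ι), P),
    IsGradedHom ℳ (directSumGrading fun (_ : ι) => 𝒬) f →
      ∃ s : Finset ι, ∀ (m : M) (i : ι), i ∉ s → f m i = 0

/-- A `G`-graded ring is steady if all small graded modules over it are finitely generated. -/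
def IsSteady (𝒜 : G → AddSubgroup R) : Prop :=
  ∀ (M : Type) [AddCommGroup M] [Module R M], ∀ ℳ : G → AddSubgroup M,
    IsGradedModule 𝒜 ℳ → IsSmall 𝒜 ℳ → Module.Finite R M

/-- A graded ideal of the `G`-graded ring `(R, 𝒜)`: `I = ⨁_g (I ∩ R_g)`. -/
def IsGradedIdeal (𝒜 : G → AddSubgroup R) (I : Ideal R) : Prop :=
  I.toAddSubgroup = ⨆ g : G, I.toAddSubgroup ⊓ 𝒜 g

/-- A simple `G`-graded `R`-module: nonzero, and its only graded submodules are `0` and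
the whole module. -/
def IsSimpleGradedModule (𝒜 : G → AddSubgroup R) {S : Type} [AddCommGroup S] [Module R S]
    (𝒮 : G → AddSubgroup S) : Prop :=
  IsGradedModule 𝒜 𝒮 ∧ Nontrivial S ∧
    ∀ P : Submodule R S, (P.toAddSubgroup = ⨆ g : G, P.toAddSubgroup ⊓ 𝒮 g) →
      P = ⊥ ∨ P = ⊤

/-- The subgroup of `M →ₗ[R] N` consisting of the graded morphisms `M → N(g)`, i.e. the
degree-`g` component of the graded Hom module `⨁HOM(M, N)`. -/
def gradedHomSubgroup {M N : Type} [AddCommGroup M] [Module R M] [AddCommGroup N] [Module R N]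
    (ℳ : G → AddSubgroup M) (𝒩 : G → AddSubgroup N) (g : G) : AddSubgroup (M →ₗ[R] N) where
  carrier := {u | ∀ g' : G, ∀ m ∈ ℳ g', u m ∈ 𝒩 (g + g')}
  zero_mem' := fun g' m _ => by simp only [LinearMap.zero_apply, ZeroMemClass.zero_mem]
  add_mem' := fun {u v} hu hv g' m hm => by
    rw [LinearMap.add_apply]; exact add_mem (hu g' m hm) (hv g' m hm)
  neg_mem' := fun {u} hu g' m hm => by
    rw [LinearMap.neg_apply]; exact neg_mem (hu g' m hm)

end Defs


section GradedHelpers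

set_option linter.unusedSectionVars false
set_option linter.style.haveILetI false

variable {G R : Type} [AddCommGroup G] [CommRing R]

/-- A family of projections witnessing that `ℳ` is a grading. -/
structure IsProj {M : Type} [AddCommGroup M] (ℳ : G → AddSubgroup M) (π : G → M →+ M) : Prop where
  mem : ∀ g x, π g x ∈ ℳ g
  same : ∀ g x, x ∈ ℳ g → π g x = x
  ne : ∀ g h x, g ≠ h → x ∈ ℳ h → π g x = 0
  top : ∀ x, x ∈ ⨆ g, ℳ g

theorem internal_top {M : Type} [AddCommGroup M] {ℳ : G → AddSubgroup M} [DecidableEq G]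
    (h : DirectSum.IsInternal ℳ) (x : M) : x ∈ ⨆ g, ℳ g := by
  obtain ⟨y, rfl⟩ := h.2 x
  induction y using DirectSum.induction_on with
  | zero => simp
  | of i x =>
    simp only [DirectSum.coeAddMonoidHom_of]
    exact AddSubgroup.mem_iSup_of_mem i x.2
  | add x y hx hy => rw [map_add]; exact add_mem hx hy

theorem internal_lift {M X : Type} [AddCommGroup M] [AddCommGroup X] {ℳ : G → AddSubgroup M}
    [DecidableEq G] (h : DirectSum.IsInternal ℳ) (φ : ∀ g, ℳ g →+ X) :
    ∃ Φ : M →+ X, ∀ g (m : ℳ g), Φ m = φ g m := by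
  let e := AddEquiv.ofBijective _ h
  refine ⟨(DirectSum.toAddMonoid φ).comp e.symm.toAddMonoidHom, fun g m => ?_⟩
  have : e.symm (m : M) = DirectSum.of (fun g => ℳ g) g m := by
    rw [AddEquiv.symm_apply_eq]
    exact (DirectSum.coeAddMonoidHom_of ℳ g m).symm
  simp [this]

theorem internal_induction {M : Type} [AddCommGroup M] {ℳ : G → AddSubgroup M}
    (top : ∀ x, x ∈ ⨆ g, ℳ g) {C : M → Prop} (hom : ∀ g, ∀ x ∈ ℳ g, C x)
    (add : ∀ x y, C x → C y → C (x + y)) (x : M) : C x :=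
  AddSubgroup.iSup_induction ℳ (C := C) (top x) hom (hom 0 0 (zero_mem _)) add

theorem exists_isProj {M : Type} [AddCommGroup M] {ℳ : G → AddSubgroup M} [DecidableEq G]
    (h : DirectSum.IsInternal ℳ) : ∃ π, IsProj ℳ π := by
  have := fun g => internal_lift h (fun k => if k = g then (ℳ k).subtype else 0)
  choose π hπ using this
  have h1 : ∀ g x, x ∈ ℳ g → π g x = x := fun g x hx => by
    have := hπ g g ⟨x, hx⟩
    simpa using this
  have h2 : ∀ g h x, g ≠ h → x ∈ ℳ h → π g x = 0 := fun g h x hne hx => by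
    have := hπ g h ⟨x, hx⟩
    simpa [hne.symm] using this
  refine ⟨π, ⟨fun g x => ?_, h1, h2, internal_top h⟩⟩
  refine internal_induction (internal_top h) (C := fun x => π g x ∈ ℳ g) ?_ ?_ x
  · intro k x hx
    by_cases hk : g = k
    · subst hk; rw [h1 _ _ hx]; exact hx
    · rw [h2 _ _ _ hk hx]; exact zero_mem _
  · intro x y hx hy
    rw [map_add]; exact add_mem hx hy

theorem IsProj.internal {M : Type} [AddCommGroup M] {ℳ : G → AddSubgroup M} [DecidableEq G]
    {π : G → M →+ M} (h : IsProj ℳ π) : DirectSum.IsInternal ℳ := by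
  constructor
  · rw [injective_iff_map_eq_zero]
    intro y hy
    have key : ∀ (z : ⨁ g, ℳ g) (g : G), π g (DirectSum.coeAddMonoidHom ℳ z) = z g := by
      intro z g
      induction z using DirectSum.induction_on with
      | zero => simp
      | of i x =>
        simp only [DirectSum.coeAddMonoidHom_of]
        by_cases hk : g = i
        · subst hk; rw [h.same _ _ x.2]; simp
        · rw [h.ne _ _ _ hk x.2, DirectSum.of_eq_of_ne _ _ _ hk]; simp
      | add x y hx hy => rw [map_add, map_add, hx, hy]; simp
    ext g
    rw [← key, hy]; simp
  · intro x
    refine internal_induction h.top (C := fun x => ∃ a, DirectSum.coeAddMonoidHom ℳ a = x) ?_ ?_ x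
    · intro g x hx
      exact ⟨DirectSum.of (fun g => ℳ g) g ⟨x, hx⟩, by simp⟩
    · rintro _ _ ⟨a, rfl⟩ ⟨b, rfl⟩
      exact ⟨a + b, by simp⟩

theorem IsGradedModule.proj {M : Type} [AddCommGroup M] [Module R M] {𝒜 : G → AddSubgroup R}
    {ℳ : G → AddSubgroup M} (h : IsGradedModule 𝒜 ℳ) : ∃ π, IsProj ℳ π := by
  letI := Classical.decEq G
  exact exists_isProj h.2

theorem IsGradedRing.gmodule {𝒜 : G → AddSubgroup R} (h : IsGradedRing 𝒜) :
    IsGradedModule 𝒜 𝒜 := ⟨fun ha hb => h.2.1 ha hb, h.2.2⟩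

/-- Graded morphisms commute with projections. -/
theorem IsProj.comm {M N : Type} [AddCommGroup M] [AddCommGroup N]
    {ℳ : G → AddSubgroup M} {𝒩 : G → AddSubgroup N} {π : G → M →+ M} {ρ : G → N →+ N}
    (hπ : IsProj ℳ π) (hρ : IsProj 𝒩 ρ) (f : M →+ N) (k : G)
    (hf : ∀ g, ∀ m ∈ ℳ g, f m ∈ 𝒩 (g + k)) (g : G) (m : M) :
    f (π g m) = ρ (g + k) (f m) := by
  refine internal_induction hπ.top (C := fun m => f (π g m) = ρ (g + k) (f m)) ?_ ?_ m
  · intro i x hx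
    by_cases hi : g = i
    · subst hi; rw [hπ.same _ _ hx, hρ.same _ _ (hf _ _ hx)]
    · rw [hπ.ne _ _ _ hi hx, hρ.ne _ _ _ (by simpa using hi) (hf _ _ hx), map_zero]
  · intro x y hx hy; simp [hx, hy]

theorem IsProj.mem_iSup {M : Type} [AddCommGroup M] {ℳ : G → AddSubgroup M}
    {π : G → M →+ M} (h : IsProj ℳ π) (P : AddSubgroup M)
    (x : M) (hP : ∀ g, π g x ∈ P) : x ∈ ⨆ g, P ⊓ ℳ g := by
  have key : ∀ x : M, ∃ s : Finset G, x = ∑ g ∈ s, π g x := by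
    letI := Classical.decEq G
    have : ∀ x : M, ∃ s : Finset G, ∀ t, s ⊆ t → x = ∑ g ∈ t, π g x := by
      intro x
      refine internal_induction h.top
        (C := fun x => ∃ s : Finset G, ∀ t, s ⊆ t → x = ∑ g ∈ t, π g x) ?_ ?_ x
      · intro g x hx
        refine ⟨{g}, fun t ht => ?_⟩
        rw [Finset.sum_eq_single g, h.same _ _ hx]
        · intro b _ hb
          exact h.ne _ _ _ hb hx
        · intro hg; exact absurd (ht (by simp)) hg
      · rintro x y ⟨s, hs⟩ ⟨t, ht⟩
        refine ⟨s ∪ t, fun u hu => ?_⟩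
        simp only [map_add, Finset.sum_add_distrib]
        rw [← hs u (Finset.union_subset_left hu), ← ht u (Finset.union_subset_right hu)]
    obtain ⟨s, hs⟩ := this x
    exact fun x => (this x).imp fun s hs => hs s subset_rfl
  obtain ⟨s, hs⟩ := key x
  rw [hs]
  exact sum_mem fun g _ => AddSubgroup.mem_iSup_of_mem g ⟨hP g, h.mem g x⟩

theorem isGradedIdeal_iff {𝒜 : G → AddSubgroup R} {π : G → R →+ R} (h : IsProj 𝒜 π)
    (I : Ideal R) : IsGradedIdeal 𝒜 I ↔ ∀ x ∈ I, ∀ g, π g x ∈ I := by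
  constructor
  · intro hI x hx g
    have hx' : x ∈ ⨆ g : G, I.toAddSubgroup ⊓ 𝒜 g := by rw [← hI]; exact hx
    refine AddSubgroup.iSup_induction _ (C := fun x => π g x ∈ I) hx' ?_ (by simp) ?_
    · rintro i x ⟨h1, h2⟩
      by_cases hi : g = i
      · subst hi; rw [h.same _ _ h2]; exact h1
      · rw [h.ne _ _ _ hi h2]; exact zero_mem _
    · intro x y hx hy
      rw [map_add]; exact add_mem hx hy
  · intro hI
    apply le_antisymm
    · intro x hx
      exact h.mem_iSup _ x (hI x hx)
    · exact iSup_le fun g => inf_le_left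

/-- grading on a graded submodule -/
theorem sub_graded {M : Type} [AddCommGroup M] [Module R M] {𝒜 : G → AddSubgroup R}
    {ℳ : G → AddSubgroup M} (h : IsGradedModule 𝒜 ℳ) {π : G → M →+ M} (hπ : IsProj ℳ π)
    (P : Submodule R M) (hP : ∀ x ∈ P, ∀ g, π g x ∈ P) :
    IsGradedModule 𝒜 (fun g => (ℳ g).comap P.subtype.toAddMonoidHom) := by
  refine ⟨fun {g h' r m} hr hm => ?_, ?_⟩
  · exact h.1 hr hm
  · let ρ : G → P →+ P := fun g =>
      { toFun := fun x => ⟨π g x, hP x x.2 g⟩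
        map_zero' := by ext; simp
        map_add' := fun x y => by ext; simp }
    letI := Classical.decEq G
    refine IsProj.internal (π := ρ) ⟨fun g x => hπ.mem g x, fun g x hx => ?_, fun g k x hgk hx => ?_, ?_⟩
    · ext; exact hπ.same g _ hx
    · ext; exact hπ.ne g k _ hgk hx
    · intro x
      obtain ⟨x, hx⟩ := x
      have hx' := hπ.mem_iSup P.toAddSubgroup x (hP x hx)
      suffices ∀ y ∈ ⨆ g, P.toAddSubgroup ⊓ ℳ g, ∀ hy : y ∈ P, (⟨y, hy⟩ : P) ∈
        ⨆ g, (ℳ g).comap P.subtype.toAddMonoidHom from this x hx' hx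
      intro y hy
      have : (⨆ g, P.toAddSubgroup ⊓ ℳ g) ≤
          (⨆ g, (ℳ g).comap P.subtype.toAddMonoidHom).map P.subtype.toAddMonoidHom := by
        refine iSup_le fun g z hz => ?_
        exact ⟨⟨z, hz.1⟩, AddSubgroup.mem_iSup_of_mem g hz.2, rfl⟩
      obtain ⟨z, hz, rfl⟩ := this hy
      intro _
      exact hz

/-- grading on a graded quotient -/
theorem quot_graded {M : Type} [AddCommGroup M] [Module R M] {𝒜 : G → AddSubgroup R}
    {ℳ : G → AddSubgroup M} (h : IsGradedModule 𝒜 ℳ) {π : G → M →+ M} (hπ : IsProj ℳ π)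
    (P : Submodule R M) (hP : ∀ x ∈ P, ∀ g, π g x ∈ P) :
    IsGradedModule 𝒜 (fun g => (ℳ g).map P.mkQ.toAddMonoidHom) := by
  refine ⟨?_, ?_⟩
  · rintro g h' r _ hr ⟨m, hm, rfl⟩
    exact ⟨r • m, h.1 hr hm, by simp⟩
  · let ρ : G → (M ⧸ P) →+ (M ⧸ P) := fun g =>
      QuotientAddGroup.map P.toAddSubgroup P.toAddSubgroup (π g) (fun x hx => hP x hx g)
    have hρ : ∀ g m, ρ g (P.mkQ m) = P.mkQ (π g m) := fun g m => rfl
    letI := Classical.decEq G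
    refine IsProj.internal (π := ρ) ⟨fun g x => ?_, ?_, ?_, ?_⟩
    · obtain ⟨m, rfl⟩ := P.mkQ_surjective x
      exact ⟨π g m, hπ.mem g m, rfl⟩
    · rintro g _ ⟨m, hm, rfl⟩
      change ρ g (P.mkQ m) = P.mkQ m
      rw [hρ, hπ.same _ _ hm]
    · rintro g k _ hgk ⟨m, hm, rfl⟩
      change ρ g (P.mkQ m) = 0
      rw [hρ, hπ.ne _ _ _ hgk hm, map_zero]
    · intro x
      obtain ⟨m, rfl⟩ := P.mkQ_surjective x
      have := hπ.top m
      rw [← AddSubgroup.map_iSup]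
      exact ⟨m, this, rfl⟩

theorem shift_graded {M : Type} [AddCommGroup M] [Module R M] {𝒜 : G → AddSubgroup R}
    {ℳ : G → AddSubgroup M} (h : IsGradedModule 𝒜 ℳ) (k : G) :
    IsGradedModule 𝒜 (fun g => ℳ (g - k)) := by
  obtain ⟨π, hπ⟩ := h.proj
  refine ⟨fun {g h' r m} hr hm => ?_, ?_⟩
  · have := h.1 hr hm
    rwa [← add_sub_assoc] at this
  · letI := Classical.decEq G
    refine IsProj.internal (π := fun g => π (g - k)) ⟨fun g x => hπ.mem _ x,
      fun g x hx => hπ.same _ _ hx, fun g k x hgk hx => hπ.ne _ _ _ (by simpa using hgk) hx, ?_⟩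
    intro x
    refine internal_induction hπ.top (C := fun x => x ∈ ⨆ g, ℳ (g - k)) ?_ ?_ x
    · intro g x hx
      exact AddSubgroup.mem_iSup_of_mem (g + k) (by simpa using hx)
    · intro x y hx hy; exact add_mem hx hy

end GradedHelpers

section Cofree

set_option linter.unusedSectionVars false
set_option linter.style.haveILetI false

variable {G R : Type} [AddCommGroup G] [CommRing R]

/-- The graded action of the components of `R` on copies of an `R`-module `D`. -/
@[reducible] noncomputable def cofreeGmodule [DecidableEq G] (𝒜 : G → AddSubgroup R) [SetLike.GradedMonoid 𝒜]
    (D : Type) [AddCommGroup D] [Module R D] :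
    DirectSum.Gmodule (fun g => 𝒜 g) (fun _ : G => D) where
  smul a d := (a : R) • d
  one_smul := fun ⟨i, d⟩ => Sigma.ext (zero_add i) (heq_of_eq (one_smul R d))
  mul_smul := fun ⟨i, a⟩ ⟨j, b⟩ ⟨k, d⟩ =>
    Sigma.ext (add_assoc i j k) (heq_of_eq (mul_smul (a : R) (b : R) d))
  smul_add a b c := smul_add (a : R) b c
  smul_zero a := smul_zero (a : R)
  add_smul a b c := add_smul (a : R) b c
  zero_smul b := zero_smul R b

theorem exists_cofree (𝒜 : G → AddSubgroup R) (h𝒜 : IsGradedRing 𝒜)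
    (D : Type) [AddCommGroup D] [Module R D] :
    ∃ (E : Type) (_ : AddCommGroup E) (_ : Module R E) (ι : G → D →+ E) (ε : G → E →+ D)
      (σ : E →+ D),
      (∀ g h r d, r ∈ 𝒜 g → r • ι h d = ι (g + h) (r • d)) ∧
      (∀ g d, ε g (ι g d) = d) ∧ (∀ g h d, g ≠ h → ε g (ι h d) = 0) ∧
      (∀ g d, σ (ι g d) = d) ∧ (∀ x, x ∈ ⨆ g, (ι g).range) := by
  letI := Classical.decEq G
  haveI : SetLike.GradedMonoid 𝒜 :=
    { one_mem := h𝒜.1, mul_mem := fun _ _ _ _ ha hb => h𝒜.2.1 ha hb }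
  letI : DirectSum.Decomposition 𝒜 := DirectSum.IsInternal.chooseDecomposition 𝒜 h𝒜.2.2
  letI : GradedRing 𝒜 := { }
  letI := cofreeGmodule 𝒜 D
  letI m0 : Module (⨁ g, 𝒜 g) (⨁ _ : G, D) := DirectSum.Gmodule.module _ _
  letI m1 : Module R (⨁ _ : G, D) :=
    Module.compHom (⨁ _ : G, D) (DirectSum.decomposeRingEquiv 𝒜).toRingHom
  refine ⟨⨁ _ : G, D, inferInstance, m1, fun g => DirectSum.of (fun _ : G => D) g,
    fun g => DFinsupp.evalAddMonoidHom g, DirectSum.toAddMonoid fun _ => AddMonoidHom.id D,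
    ?_, ?_, ?_, ?_, ?_⟩
  · intro g h r d hr
    change (DirectSum.decompose 𝒜 r) • (DirectSum.of (fun _ : G => D) h d) = _
    rw [DirectSum.decompose_of_mem 𝒜 hr]
    exact DirectSum.Gmodule.of_smul_of (fun g => 𝒜 g) (fun _ : G => D) _ _
  · intro g d
    exact DirectSum.of_eq_same (β := fun _ : G => D) g d
  · intro g h d hgh
    exact DirectSum.of_eq_of_ne (β := fun _ : G => D) _ _ d hgh
  · intro g d
    simp
  · intro x
    induction x using DirectSum.induction_on with
    | zero => exact zero_mem _
    | of i x => exact AddSubgroup.mem_iSup_of_mem i ⟨x, rfl⟩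
    | add x y hx hy => exact add_mem hx hy

theorem exists_injective_cogenerator (𝒜 : G → AddSubgroup R) (h𝒜 : IsGradedRing 𝒜) :
    ∃ (E : Type) (_ : AddCommGroup E) (_ : Module R E) (ℰ : G → AddSubgroup E),
      IsGradedModule 𝒜 ℰ ∧ IsInjectiveGradedModule 𝒜 ℰ ∧ IsCogenerator 𝒜 ℰ := by
  letI := Classical.decEq G
  haveI hinj : Module.Injective R (CharacterModule R) :=
    (Module.Flat.iff_characterModule_injective).1 inferInstance
  have htop : ∀ r : R, r ∈ ⨆ g, 𝒜 g := internal_top h𝒜.2.2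
  obtain ⟨E, _, _, ι, ε, σ, hsm, hε, hε0, hσ, hE⟩ := exists_cofree 𝒜 h𝒜 (CharacterModule R)
  have hσl : ∀ (r : R) (x : E), σ (r • x) = r • σ x := by
    intro r x
    refine internal_induction htop (C := fun r => σ (r • x) = r • σ x) ?_ ?_ r
    · intro g r hr
      refine internal_induction hE (C := fun x => σ (r • x) = r • σ x) ?_ ?_ x
      · rintro h _ ⟨d, rfl⟩
        rw [hsm _ _ _ _ hr, hσ, hσ]
      · intro x y hx hy; simp [hx, hy]
    · intro x y hx hy; simp [add_smul, hx, hy]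
  let σl : E →ₗ[R] CharacterModule R := { σ with map_smul' := hσl }
  have lift : ∀ (B : Type) [AddCommGroup B] [Module R B] (ℬ : G → AddSubgroup B)
      (_ : IsGradedModule 𝒜 ℬ) (θ : B →ₗ[R] CharacterModule R),
      ∃ g : B →ₗ[R] E, ∀ h, ∀ b ∈ ℬ h, g b = ι h (θ b) := by
    intro B _ _ ℬ hB θ
    obtain ⟨Φ, hΦ⟩ := internal_lift hB.2
      (fun h => ((ι h).comp θ.toAddMonoidHom).comp (ℬ h).subtype)
    have hΦ' : ∀ h, ∀ b ∈ ℬ h, Φ b = ι h (θ b) := fun h b hb => hΦ h ⟨b, hb⟩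
    refine ⟨{ Φ with map_smul' := ?_ }, hΦ'⟩
    intro r x
    change Φ (r • x) = r • Φ x
    refine internal_induction htop (C := fun r => Φ (r • x) = r • Φ x) ?_ ?_ r
    · intro g r hr
      refine internal_induction (internal_top hB.2) (C := fun x => Φ (r • x) = r • Φ x) ?_ ?_ x
      · intro h b hb
        rw [hΦ' _ _ hb, hsm _ _ _ _ hr, hΦ' _ _ (hB.1 hr hb), map_smul]
      · intro x y hx hy; simp [hx, hy]
    · intro x y hx hy; simp [add_smul, hx, hy]
  refine ⟨E, inferInstance, inferInstance, fun g => (ι g).range, ⟨?_, ?_⟩, ?_, ?_⟩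
  · rintro g h r _ hr ⟨d, rfl⟩
    exact ⟨r • d, (hsm _ _ _ _ hr).symm⟩
  · refine IsProj.internal (π := fun g => (ι g).comp (ε g)) ⟨fun g x => ⟨ε g x, rfl⟩, ?_, ?_, hE⟩
    · rintro g _ ⟨d, rfl⟩
      simp [hε]
    · rintro g h _ hgh ⟨d, rfl⟩
      simp [hε0 _ _ _ hgh]
  · intro A B _ _ _ _ 𝒮A 𝒮B hA hB i hi hig f hf
    obtain ⟨θ, hθ⟩ := Module.Injective.extension_property R _ _ _ i hi (σl ∘ₗ f)
    obtain ⟨g, hg⟩ := lift B 𝒮B hB θ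
    refine ⟨g, fun h b hb => ⟨θ b, (hg h b hb).symm⟩, ?_⟩
    ext a
    refine internal_induction (internal_top hA.2) (C := fun a => (g ∘ₗ i) a = f a) ?_ ?_ a
    · intro h a ha
      have h1 : θ (i a) = σ (f a) := DFunLike.congr_fun hθ a
      obtain ⟨d, hd⟩ := hf h a ha
      rw [LinearMap.comp_apply, hg h _ (hig h a ha), h1, ← hd, hσ]
    · intro x y hx hy; rw [map_add, hx, hy, map_add]
  · intro N N' _ _ _ _ 𝒩 𝒩' hN hN' u hu hu0
    obtain ⟨h, x, hx, hux⟩ : ∃ h, ∃ x ∈ 𝒩 h, u x ≠ 0 := by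
      by_contra! hcon
      apply hu0
      ext x
      refine internal_induction (internal_top hN.2) (C := fun a => u a = 0) hcon ?_ x
      intro x y hx hy; rw [map_add, hx, hy, add_zero]
    obtain ⟨c, hc⟩ := CharacterModule.exists_character_apply_ne_zero_of_ne_zero hux
    let θ : N' →ₗ[R] CharacterModule R :=
      { toFun := fun n => (CharacterModule.dual (LinearMap.toSpanSingleton R N' n)) c
        map_add' := fun x y => by 
          ext r
          change c (r • (x + y)) = c (r • x) + c (r • y)
          rw [smul_add, map_add]
        map_smul' := fun s x => by
          ext r
          change c (r • s • x) = c ((s * r) • x)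
          rw [smul_smul, mul_comm] }
    obtain ⟨v, hv⟩ := lift N' 𝒩' hN' θ
    refine ⟨v, fun h b hb => ⟨θ b, (hv h b hb).symm⟩, fun h0 => hc ?_⟩
    have h1 : v (u x) = 0 := DFunLike.congr_fun h0 x
    rw [hv h _ (hu h x hx)] at h1
    have h2 : θ (u x) = 0 := by rw [← hε h (θ (u x)), h1, map_zero]
    have h3 := DFunLike.congr_fun h2 (1 : R)
    change c ((1 : R) • u x) = 0 at h3
    rwa [one_smul] at h3

end Cofree

section Baer

set_option linter.unusedSectionVars false
set_option linter.style.haveILetI false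

variable {G R : Type} [AddCommGroup G] [CommRing R]

theorem sum_of_apply {E : Type} [AddCommGroup E] (n : ℕ) (y : ℕ → E) (k : ℕ) :
    (∑ j ∈ Finset.range n, DirectSum.of (fun _ : ℕ => E) j (y j)) k =
      if k < n then y k else 0 := by
  induction n with
  | zero => simp
  | succ n ih =>
    rw [Finset.sum_range_succ, DirectSum.add_apply, ih]
    rcases lt_trichotomy k n with h | h | h
    · rw [DirectSum.of_eq_of_ne _ _ _ h.ne, if_pos h, if_pos (by omega), add_zero]
    · subst h
      rw [DirectSum.of_eq_same]
      simp
    · rw [DirectSum.of_eq_of_ne _ _ _ h.ne', if_neg (by omega), if_neg (by omega), add_zero]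

theorem graded_baer (𝒜 : G → AddSubgroup R) (h𝒜 : IsGradedRing 𝒜)
    {F : Type} [AddCommGroup F] [Module R F] (ℱ : G → AddSubgroup F)
    (hsm : ∀ g h r m, r ∈ 𝒜 g → m ∈ ℱ h → r • m ∈ ℱ (g + h))
    (hB : ∀ (I : Ideal R) (h : G), IsGradedIdeal 𝒜 I → ∀ φ : I →ₗ[R] F,
      (∀ g, ∀ r : I, (r : R) ∈ 𝒜 g → φ r ∈ ℱ (g + h)) → ∃ e ∈ ℱ h, ∀ r : I, φ r = (r : R) • e) :
    IsInjectiveGradedModule 𝒜 ℱ := by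
  intro A B _ _ _ _ 𝒮A 𝒮B hA hBg i hi hig f hf
  obtain ⟨α, hα⟩ := hA.proj
  obtain ⟨β, hβ⟩ := hBg.proj
  obtain ⟨ρ, hρ⟩ := h𝒜.gmodule.proj
  let S : Set (B →ₗ.[R] F) := {p | (∀ x ∈ p.domain, ∀ g, β g x ∈ p.domain) ∧
    ∀ g (x : p.domain), (x : B) ∈ 𝒮B g → p x ∈ ℱ g}
  let e := LinearEquiv.ofInjective i hi
  let p0 : B →ₗ.[R] F := ⟨LinearMap.range i, f ∘ₗ e.symm.toLinearMap⟩
  have hicomm : ∀ g a, i (α g a) = β g (i a) := by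
    intro g a
    have := hα.comm hβ i.toAddMonoidHom 0 (fun g m hm => by simpa using hig g m hm) g a
    simpa using this
  have hp0v : ∀ a (h : i a ∈ p0.domain), p0 ⟨i a, h⟩ = f a := by
    intro a h
    change f (e.symm ⟨i a, h⟩) = f a
    congr 1
    rw [LinearEquiv.symm_apply_eq]
    rfl
  have hp0 : p0 ∈ S := by
    refine ⟨?_, ?_⟩
    · rintro _ ⟨a, rfl⟩ g
      exact ⟨α g a, hicomm g a⟩
    · rintro g ⟨_, ⟨a, rfl⟩⟩ hx
      have hval := hp0v a ⟨a, rfl⟩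
      refine Eq.mpr (congrArg (· ∈ ℱ g) hval) ?_
      apply hf
      have h1 : i (α g a) = i a := by rw [hicomm]; exact hβ.same _ _ hx
      rw [← hi h1]
      exact hα.mem g a
  obtain ⟨p, hp0p, hmax⟩ := zorn_le_nonempty₀ S (by
    intro c hc hchain y hy
    have hd : DirectedOn (· ≤ ·) c := hchain.directedOn
    have hne : c.Nonempty := ⟨y, hy⟩
    refine ⟨LinearPMap.sSup c hd, ⟨?_, ?_⟩, fun z hz => LinearPMap.le_sSup hd hz⟩
    · intro x hx g
      rw [LinearPMap.mem_domain_sSup_iff hne] at hx ⊢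
      obtain ⟨q, hq, hxq⟩ := hx
      exact ⟨q, hq, (hc hq).1 x hxq g⟩
    · rintro g ⟨x, hx⟩ hxg
      obtain ⟨q, hq, hxq⟩ := (LinearPMap.mem_domain_sSup_iff hne hd).1 hx
      rw [LinearPMap.sSup_apply hd hq ⟨x, hxq⟩]
      exact (hc hq).2 g _ hxg) p0 hp0
  have hpS : p ∈ S := hmax.1
  have hdom : p.domain = ⊤ := by
    by_contra hne
    obtain ⟨h, b, hb, hbp⟩ : ∃ h, ∃ b ∈ 𝒮B h, b ∉ p.domain := by
      by_contra! hcon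
      apply hne
      rw [eq_top_iff]
      intro x _
      exact internal_induction hβ.top (C := fun x => x ∈ p.domain) hcon
        (fun x y hx hy => add_mem hx hy) x
    have hcb : ∀ r g, ρ g r • b = β (g + h) (r • b) := by
      intro r g
      exact hρ.comm hβ (LinearMap.toSpanSingleton R B b).toAddMonoidHom h
        (fun g m hm => hBg.1 hm hb) g r
    let I : Ideal R := p.domain.comap (LinearMap.toSpanSingleton R B b)
    let φ : I →ₗ[R] F := p.toFun ∘ₗ ((LinearMap.toSpanSingleton R B b).restrict
      (p := I) (q := p.domain) (fun x hx => hx))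
    have hφ : ∀ r : I, φ r = p ⟨(r : R) • b, r.2⟩ := fun r => rfl
    obtain ⟨y, hy, hye⟩ := hB I h (by
      rw [isGradedIdeal_iff hρ]
      intro r hr g
      change ρ g r • b ∈ p.domain
      rw [hcb]
      exact hpS.1 _ hr _) φ (by
      intro g r hr
      rw [hφ]
      exact hpS.2 _ _ (hBg.1 hr hb))
    have hpy : ∀ (r : R) (hr : r • b ∈ p.domain), p ⟨r • b, hr⟩ = r • y := fun r hr => by
      rw [← hye ⟨r, hr⟩, hφ]
    let q : B →ₗ.[R] F := LinearPMap.mkSpanSingleton' b y (by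
      intro c hc
      have h1 : c • b ∈ p.domain := by rw [hc]; exact zero_mem _
      have h2 := hpy c h1
      have h3 : (⟨c • b, h1⟩ : p.domain) = 0 := by ext; exact hc
      rw [h3, LinearPMap.map_zero] at h2
      exact h2.symm)
    have hqv : ∀ r hr, q ⟨r • b, hr⟩ = r • y := fun r hr =>
      LinearPMap.mkSpanSingleton'_apply b y _ r hr
    have hag : ∀ (x : p.domain) (y : q.domain), (x : B) = y → p x = q y := by
      rintro ⟨x, hx⟩ ⟨z, hz⟩ hxz
      obtain ⟨r, rfl⟩ := Submodule.mem_span_singleton.1 hz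
      change x = r • b at hxz
      subst hxz
      rw [hqv, hpy]
    have hsup : p.sup q hag ∈ S := by
      refine ⟨?_, ?_⟩
      · intro x hx g
        rw [LinearPMap.domain_sup] at hx ⊢
        obtain ⟨x, hx1, z, hz, rfl⟩ := Submodule.mem_sup.1 hx
        obtain ⟨r, rfl⟩ := Submodule.mem_span_singleton.1 hz
        rw [map_add]
        refine Submodule.add_mem_sup (hpS.1 _ hx1 _) ?_
        have := hcb r (g - h)
        rw [sub_add_cancel] at this
        rw [← this]
        exact Submodule.mem_span_singleton.2 ⟨_, rfl⟩
      · rintro g ⟨x, hx⟩ hxg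
        have hx' := hx
        rw [LinearPMap.domain_sup] at hx'
        obtain ⟨x, hx1, z, hz, rfl⟩ := Submodule.mem_sup.1 hx'
        obtain ⟨r, rfl⟩ := Submodule.mem_span_singleton.1 hz
        have h1 := hcb r (g - h)
        rw [sub_add_cancel] at h1
        have hz2 : ρ (g - h) r • b ∈ q.domain := Submodule.mem_span_singleton.2 ⟨_, rfl⟩
        have hval := LinearPMap.sup_apply hag ⟨β g x, hpS.1 _ hx1 g⟩ ⟨ρ (g - h) r • b, hz2⟩
          ⟨x + r • b, hx'⟩ (by
            change β g x + ρ (g - h) r • b = x + r • b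
            rw [h1, ← map_add]
            exact hβ.same _ _ hxg)
        rw [hqv] at hval
        refine Eq.mpr (congrArg (· ∈ ℱ g) hval) ?_
        refine add_mem (hpS.2 _ _ (hβ.mem _ _)) ?_
        have := hsm _ _ _ _ (hρ.mem (g - h) r) hy
        rwa [sub_add_cancel] at this
    have hle := hmax.2 hsup (LinearPMap.left_le_sup p q hag)
    apply hbp
    apply hle.1
    rw [LinearPMap.domain_sup]
    exact Submodule.mem_sup_right (Submodule.mem_span_singleton_self b)
  refine ⟨p.toFun ∘ₗ LinearMap.codRestrict p.domain LinearMap.id (fun x => by rw [hdom]; trivial),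
    ?_, ?_⟩
  · intro g b hb
    exact hpS.2 g _ hb
  · ext a
    rw [← hp0v a ⟨a, rfl⟩]
    exact (hp0p.2 rfl).symm

theorem directSum_injective (𝒜 : G → AddSubgroup R) (h𝒜 : IsGradedRing 𝒜)
    (hN : ∀ I : ℕ → Ideal R, (∀ n, IsGradedIdeal 𝒜 (I n)) → Monotone I →
        ∃ n, ∀ m, n ≤ m → I m = I n)
    (E : Type) [AddCommGroup E] [Module R E] (ℰ : G → AddSubgroup E)
    (hE : IsGradedModule 𝒜 ℰ) (hEi : IsInjectiveGradedModule 𝒜 ℰ) :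
    IsInjectiveGradedModule 𝒜 (directSumGrading (fun (_ : ℕ) => ℰ)) := by
  obtain ⟨ρ, hρ⟩ := h𝒜.gmodule.proj
  obtain ⟨η, hη⟩ := hE.proj
  refine graded_baer 𝒜 h𝒜 _ ?_ ?_
  · intro g h r m hr hm i
    exact hE.1 hr (hm i)
  · intro I h hI φ hφ
    rw [isGradedIdeal_iff hρ] at hI
    have hIg := shift_graded (sub_graded h𝒜.gmodule hρ I hI) h
    have hRg := shift_graded h𝒜.gmodule h
    let φk : ℕ → I →ₗ[R] E := fun k => DirectSum.component R ℕ (fun _ => E) k ∘ₗ φ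
    have hφk : ∀ k r, φk k r = φ r k := fun k r => rfl
    have hcomm : ∀ k (g : G) (r : I), φk k ⟨ρ g r, hI r r.2 g⟩ = η (g + h) (φk k r) := by
      intro k g r
      obtain ⟨r, hr⟩ := r
      have key : ∀ x ∈ ⨆ g, I.toAddSubgroup ⊓ 𝒜 g, ∀ hx : x ∈ I,
          φk k ⟨ρ g x, hI x hx g⟩ = η (g + h) (φk k ⟨x, hx⟩) := by
        intro x hx
        suffices ∃ hx : x ∈ I, φk k ⟨ρ g x, hI x hx g⟩ = η (g + h) (φk k ⟨x, hx⟩) from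
          fun _ => this.2
        refine AddSubgroup.iSup_induction _ (C := fun x => ∃ hx : x ∈ I,
          φk k ⟨ρ g x, hI x hx g⟩ = η (g + h) (φk k ⟨x, hx⟩)) hx ?_ ?_ ?_
        · rintro j x ⟨hx1, hx2⟩
          refine ⟨hx1, ?_⟩
          have hd : φk k ⟨x, hx1⟩ ∈ ℰ (j + h) := hφ j ⟨x, hx1⟩ hx2 k
          by_cases hj : g = j
          · subst hj
            rw [hη.same _ _ hd]
            congr 2
            exact hρ.same _ _ hx2
          · rw [hη.ne _ _ _ (by simpa using hj) hd]
            have : (⟨ρ g x, hI x hx1 g⟩ : I) = 0 := by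
              ext; exact hρ.ne _ _ _ hj hx2
            rw [this, map_zero]
        · refine ⟨zero_mem _, ?_⟩
          have h1 : (⟨ρ g 0, hI 0 (zero_mem _) g⟩ : I) = 0 := by ext; simp
          have h2 : (⟨0, zero_mem _⟩ : I) = 0 := rfl
          rw [h1, h2, map_zero, map_zero]
        · rintro x y ⟨hx, hx'⟩ ⟨hy, hy'⟩
          refine ⟨add_mem hx hy, ?_⟩
          have h1 : (⟨ρ g (x + y), hI _ (add_mem hx hy) g⟩ : I) =
            ⟨ρ g x, hI x hx g⟩ + ⟨ρ g y, hI y hy g⟩ := by ext; simp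
          have h2 : (⟨x + y, add_mem hx hy⟩ : I) = ⟨x, hx⟩ + ⟨y, hy⟩ := rfl
          rw [h1, h2, map_add, map_add, map_add, hx', hy']
      exact key r (hρ.mem_iSup I.toAddSubgroup r (hI r hr)) hr
    -- the chain of ideals
    let J : ℕ → Ideal R := fun n =>
      (⨅ k : {k : ℕ // n ≤ k}, LinearMap.ker (φk k)).map I.subtype
    have hJ : ∀ n x, x ∈ J n ↔ ∃ hx : x ∈ I, ∀ k, n ≤ k → φk k ⟨x, hx⟩ = 0 := by
      intro n x
      simp [J, Submodule.mem_map, Submodule.mem_iInf]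
    obtain ⟨n, hn⟩ := hN J (by
      intro n
      rw [isGradedIdeal_iff hρ]
      intro x hx g
      rw [hJ] at hx ⊢
      obtain ⟨hx, hx'⟩ := hx
      refine ⟨hI x hx g, fun k hk => ?_⟩
      rw [hcomm k g ⟨x, hx⟩, hx' k hk, map_zero]) (by
      intro n m hnm x hx
      rw [hJ] at hx ⊢
      obtain ⟨hx, hx'⟩ := hx
      exact ⟨hx, fun k hk => hx' k (hnm.trans hk)⟩)
    have hvan : ∀ (r : I) k, n ≤ k → φ r k = 0 := by
      letI := Classical.decEq E
      intro r
      obtain ⟨N, hN⟩ : ∃ N, ∀ k, N ≤ k → φ r k = 0 := by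
        refine ⟨(DFinsupp.support (φ r)).sup id + 1, fun k hk => ?_⟩
        by_contra hne
        have hmem : k ∈ DFinsupp.support (φ r) := by
          rw [DFinsupp.mem_support_iff]; exact hne
        have := Finset.le_sup (f := id) hmem
        simp only [id] at this
        omega
      have h1 : (r : R) ∈ J (max n N) := by
        rw [hJ]
        exact ⟨r.2, fun k hk => hN k ((le_max_right _ _).trans hk)⟩
      rw [hn _ (le_max_left _ _), hJ] at h1
      exact h1.2
    have hext : ∀ k, ∃ y ∈ ℰ h, ∀ r : I, φ r k = (r : R) • y := by
      intro k
      obtain ⟨ψ, hψ, hψ'⟩ := hEi I R _ _ hIg hRg I.subtype Subtype.val_injective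
        (fun g m hm => hm) (φk k) (by
          intro g m hm
          have := hφ (g - h) m hm k
          rwa [sub_add_cancel] at this)
      refine ⟨ψ 1, hψ h 1 (by simpa using h𝒜.1), fun r => ?_⟩
      rw [← map_smul, smul_eq_mul, mul_one, ← hφk, ← hψ']
      rfl
    choose y hy hyr using hext
    let Y : ⨁ _ : ℕ, E := ∑ k ∈ Finset.range n, DirectSum.of (fun _ : ℕ => E) k (y k)
    have hY : ∀ k, Y k = if k < n then y k else 0 := by
      intro k
      exact sum_of_apply n y k
    refine ⟨Y, ?_, ?_⟩
    · intro k
      rw [hY]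
      split_ifs
      · exact hy k
      · exact zero_mem _
    · intro r
      refine DFinsupp.ext fun k => ?_
      change φ r k = (r : R) • Y k
      rw [hY]
      split_ifs with hk
      · exact hyr k r
      · rw [smul_zero]; exact hvan r k (not_lt.1 hk)

theorem noetherian_of_injective (𝒜 : G → AddSubgroup R) (h𝒜 : IsGradedRing 𝒜)
    (E : Type) [AddCommGroup E] [Module R E] (ℰ : G → AddSubgroup E)
    (hEc : IsCogenerator 𝒜 ℰ)
    (hF : IsInjectiveGradedModule 𝒜 (directSumGrading (fun (_ : ℕ) => ℰ)))
    (I : ℕ → Ideal R) (hI : ∀ n, IsGradedIdeal 𝒜 (I n)) (hmono : Monotone I) :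
    ∃ n, ∀ m, n ≤ m → I m = I n := by
  obtain ⟨ρ, hρ⟩ := h𝒜.gmodule.proj
  by_contra! hcon
  let J : Ideal R := ⨆ n, I n
  have hJm : ∀ x, x ∈ J ↔ ∃ n, x ∈ I n := fun x =>
    Submodule.mem_iSup_of_directed I hmono.directed_le
  have hI' := fun n => (isGradedIdeal_iff hρ (I n)).1 (hI n)
  have hJ : ∀ x ∈ J, ∀ g, ρ g x ∈ J := by
    intro x hx g
    rw [hJm] at hx ⊢
    exact hx.imp fun n hn => hI' n x hn g
  have hJg := sub_graded h𝒜.gmodule hρ J hJ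
  have hex : ∀ n, ∃ f : J →ₗ[R] E,
      IsGradedHom (fun g => (𝒜 g).comap J.subtype.toAddMonoidHom) ℰ f ∧ f ≠ 0 ∧
      ∀ x : J, (x : R) ∈ I n → f x = 0 := by
    intro n
    have hQ := quot_graded h𝒜.gmodule hρ (I n) (hI' n)
    obtain ⟨v, hv, hvu⟩ := hEc J (R ⧸ I n) _ _ hJg hQ ((Submodule.mkQ (I n)) ∘ₗ J.subtype)
      (fun g m hm => ⟨m, hm, rfl⟩) (by
        intro h0
        obtain ⟨m, hm, hne⟩ := hcon n
        apply hne
        apply le_antisymm _ (hmono hm)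
        intro x hx
        have h1 := DFunLike.congr_fun h0 (⟨x, (hJm x).2 ⟨m, hx⟩⟩ : J)
        exact (Submodule.Quotient.mk_eq_zero _).1 h1)
    refine ⟨v ∘ₗ ((Submodule.mkQ (I n)) ∘ₗ J.subtype), fun g m hm => hv g _ ⟨m, hm, rfl⟩, hvu, ?_⟩
    intro x hx
    have : (Submodule.mkQ (I n)) (x : R) = 0 := (Submodule.Quotient.mk_eq_zero _).2 hx
    change v ((Submodule.mkQ (I n)) (x : R)) = 0
    rw [this, map_zero]
  choose f hfg hf0 hfI using hex
  have hfin : ∀ x : J, ∃ N, ∀ k, N ≤ k → f k x = 0 := by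
    intro x
    obtain ⟨n, hn⟩ := (hJm x).1 x.2
    exact ⟨n, fun k hk => hfI k x (hmono hk hn)⟩
  choose N hN using hfin
  let φ0 : J → ⨁ _ : ℕ, E := fun x =>
    ∑ k ∈ Finset.range (N x), DirectSum.of (fun _ : ℕ => E) k (f k x)
  have hφ0 : ∀ x k, φ0 x k = f k x := by
    intro x k
    have : φ0 x k = if k < N x then f k x else 0 :=
      sum_of_apply (N x) (fun k => f k x) k
    rw [this]
    split_ifs with hk
    · rfl
    · exact (hN x k (not_lt.1 hk)).symm
  let φ : J →ₗ[R] ⨁ _ : ℕ, E :=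
    { toFun := φ0
      map_add' := fun x y => by
        refine DFinsupp.ext fun k => ?_
        change φ0 (x + y) k = φ0 x k + φ0 y k
        simp only [hφ0, map_add]
      map_smul' := fun r x => by
        refine DFinsupp.ext fun k => ?_
        change φ0 (r • x) k = r • φ0 x k
        simp only [hφ0, map_smul] }
  obtain ⟨ψ, -, hψ⟩ := hF J R _ _ hJg h𝒜.gmodule J.subtype Subtype.val_injective
    (fun g m hm => hm) φ (by
      intro g m hm k
      change φ0 m k ∈ ℰ g
      rw [hφ0]
      exact hfg k g m hm)
  letI := Classical.decEq E
  let k := (DFinsupp.support (ψ 1)).sup id + 1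
  have hk : ψ 1 k = 0 := by
    by_contra hne
    have hmem : k ∈ DFinsupp.support (ψ 1) := by
      rw [DFinsupp.mem_support_iff]; exact hne
    have := Finset.le_sup (f := id) hmem
    simp only [id, k] at this
    omega
  apply hf0 k
  ext x
  have h1 : ψ x = φ x := DFunLike.congr_fun hψ x
  have h2 : ψ x = (x : R) • ψ 1 := by rw [← map_smul, smul_eq_mul, mul_one]
  rw [← hφ0]
  change φ x k = 0
  rw [← h1, h2]
  change (x : R) • ψ 1 k = 0
  rw [hk, smul_zero]

end Baer

/-- **Statement 6** (Proposition 1.79, graded Bass–Papp): a `G`-graded commutative ring is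
noetherian (ascending chains of graded ideals are stationary) if and only if `E^(⊕ℕ)` is an
injective graded module for every injective cogenerator `E` of `GrMod^G(R)`. -/
theorem noetherian_iff_directSum_injective_cogenerator_injective
    {G R : Type} [AddCommGroup G] [CommRing R]
    (𝒜 : G → AddSubgroup R) (h𝒜 : IsGradedRing 𝒜) :
    (∀ I : ℕ → Ideal R, (∀ n, IsGradedIdeal 𝒜 (I n)) → Monotone I →
        ∃ n, ∀ m, n ≤ m → I m = I n) ↔
      (∀ (E : Type) [AddCommGroup E] [Module R E], ∀ ℰ : G → AddSubgroup E,
        IsGradedModule 𝒜 ℰ → IsInjectiveGradedModule 𝒜 ℰ → IsCogenerator 𝒜 ℰ →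
          IsInjectiveGradedModule 𝒜 (directSumGrading (fun (_ : ℕ) => ℰ))) := by

  constructor
  · intro hN E _ _ ℰ hE hEi _
    exact directSum_injective 𝒜 h𝒜 hN E ℰ hE hEi
  · intro h I hI hmono
    obtain ⟨E, _, _, ℰ, hE, hEi, hEc⟩ := exists_injective_cogenerator 𝒜 h𝒜
    exact noetherian_of_injective 𝒜 h𝒜 E ℰ hEc (h E ℰ hE hEi hEc) I hI hmono
end

section
/- Let G and H be additive commutative groups and ψ: G → H a surjective group homomorphism. The kernel of ψ is finite if and only if for every G-graded commutative ring R the ψ-coarsening functor •_[ψ]: GrMod^G(R) → GrMod^H(R_[ψ]) sends injective objects to injective objects. -/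
/-!
Common vocabulary: internally graded rings and modules, coarsening of gradings,
graded morphisms, and derived notions (injectivity, cogenerators, smallness, ...),
following Rohrer, "Coarsenings, injectives and Hom functors".
-/

open DirectSum

namespace CoarsenAux

open Finsupp

theorem exists_dec {G M : Type} [AddCommGroup M] (ℳ : G → AddSubgroup M)
    (h : letI := Classical.decEq G; DirectSum.IsInternal ℳ) :
    ∃ D : M →+ (G →₀ M), (∀ m g, D m g ∈ ℳ g) ∧ (∀ g, ∀ m ∈ ℳ g, D m = single g m) ∧
      (∀ m, (D m).sum (fun _ x => x) = m) := by
  letI := Classical.decEq G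
  let e := AddEquiv.ofBijective (DirectSum.coeAddMonoidHom ℳ) h
  let T : (⨁ g, ℳ g) →+ (G →₀ M) :=
    DirectSum.toAddMonoid (fun g => (singleAddHom g).comp (ℳ g).subtype)
  have hT : ∀ x g, T x g = (x g : M) := by
    intro x g
    induction x using DirectSum.induction_on with
    | zero => simp
    | of i y =>
      simp only [T, DirectSum.toAddMonoid_of, AddMonoidHom.comp_apply, singleAddHom_apply,
        AddSubgroup.subtype_apply, DirectSum.coe_of_apply, single_apply]
      split_ifs <;> rfl
    | add x y hx hy => simp [hx, hy]
  have hTs : ∀ x, (T x).sum (fun _ x => x) = DirectSum.coeAddMonoidHom ℳ x := by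
    intro x
    induction x using DirectSum.induction_on with
    | zero => simp
    | of i y => simp [T]
    | add x y hx hy =>
      rw [map_add, map_add, Finsupp.sum_add_index' (fun _ => rfl) (fun _ _ _ => rfl), hx, hy]
  refine ⟨T.comp e.symm.toAddMonoidHom, ?_, ?_, ?_⟩
  · intro m g
    change T (e.symm m) g ∈ _
    rw [hT]; exact SetLike.coe_mem _
  · intro g m hm
    have : e.symm m = DirectSum.of (fun g => ℳ g) g ⟨m, hm⟩ := by
      rw [AddEquiv.symm_apply_eq]
      exact (DirectSum.coeAddMonoidHom_of ℳ g ⟨m, hm⟩).symm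
    change T (e.symm m) = _
    rw [this]; simp [T]
  · intro m
    change (T (e.symm m)).sum _ = _
    rw [hTs]
    exact e.apply_symm_apply m

theorem internal_of {G M : Type} [AddCommGroup M] (ℳ : G → AddSubgroup M)
    (D : M →+ (G →₀ M)) (h1 : ∀ m g, D m g ∈ ℳ g) (h2 : ∀ g, ∀ m ∈ ℳ g, D m = single g m)
    (h3 : ∀ m, (D m).sum (fun _ x => x) = m) :
    (letI := Classical.decEq G; DirectSum.IsInternal ℳ) := by
  letI := Classical.decEq G
  have hT : ∀ x g, D (DirectSum.coeAddMonoidHom ℳ x) g = (x g : M) := by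
    intro x g
    induction x using DirectSum.induction_on with
    | zero => simp
    | of i y =>
      rw [DirectSum.coeAddMonoidHom_of, h2 i _ y.2]
      simp only [DirectSum.coe_of_apply, single_apply]
      split_ifs <;> rfl
    | add x y hx hy => simp [hx, hy]
  constructor
  · rw [injective_iff_map_eq_zero]
    intro x hx
    ext g
    rw [← hT, hx]; simp
  · intro m
    refine ⟨∑ g ∈ (D m).support, DirectSum.of (fun g => ℳ g) g ⟨D m g, h1 m g⟩, ?_⟩
    rw [map_sum]
    simp only [DirectSum.coeAddMonoidHom_of]
    exact h3 m

theorem hom_ind {G M : Type} [AddCommGroup M] {ℳ : G → AddSubgroup M}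
    (h : letI := Classical.decEq G; DirectSum.IsInternal ℳ) (p : M → Prop)
    (h0 : p 0) (hadd : ∀ x y, p x → p y → p (x + y)) (hh : ∀ g, ∀ m ∈ ℳ g, p m) (m : M) :
    p m := by
  obtain ⟨D, h1, -, h3⟩ := exists_dec ℳ h
  rw [← h3 m]
  exact Finset.sum_induction _ p hadd h0 (fun g _ => hh g _ (h1 m g))

theorem dec_coarsen {G H M : Type} [AddCommGroup G] [AddCommGroup H] [AddCommGroup M]
    (ψ : G →+ H) {ℳ : G → AddSubgroup M}
    (D : M →+ (G →₀ M)) (h2 : ∀ g, ∀ m ∈ ℳ g, D m = single g m) {h : H} {m : M}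
    (hm : m ∈ coarsen ψ ℳ h) {g : G} (hg : ψ g ≠ h) : D m g = 0 := by
  classical
  have : coarsen ψ ℳ h ≤ ((applyAddHom g).comp D).ker := by
    refine iSup₂_le ?_
    intro g' hg' m hm
    rw [AddMonoidHom.mem_ker]
    change D m g = 0
    rw [h2 g' m hm, single_apply, if_neg]
    rintro rfl
    exact hg hg'
  exact this hm

theorem mem_coarsen {G H M : Type} [AddCommGroup G] [AddCommGroup H] [AddCommGroup M]
    (ψ : G →+ H) {ℳ : G → AddSubgroup M} {g : G} {h : H} (hg : ψ g = h) {m : M}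
    (hm : m ∈ ℳ g) : m ∈ coarsen ψ ℳ h :=
  (le_iSup₂_of_le (f := fun g (_ : g ∈ ψ ⁻¹' {h}) => ℳ g) g hg le_rfl) hm

/-- Type synonym carrying the convolution module structure. -/
def Ref (G N : Type) [AddCommGroup N] : Type := G →₀ N

noncomputable instance (G N : Type) [AddCommGroup N] : AddCommGroup (Ref G N) :=
  inferInstanceAs (AddCommGroup (G →₀ N))

/-- The homogeneous element of the synonym. -/
noncomputable def sgl {G N : Type} [AddCommGroup N] (g : G) : N →+ Ref G N := singleAddHom g

/-- Lift of a family of additive maps. -/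
noncomputable def lft {G N M : Type} [AddCommGroup N] [AddCommGroup M] (f : G → N →+ M) :
    Ref G N →+ M := Finsupp.liftAddHom f

theorem lft_sgl {G N M : Type} [AddCommGroup N] [AddCommGroup M] (f : G → N →+ M) (g : G) (n : N) :
    lft f (sgl g n) = f g n := by
  exact Finsupp.liftAddHom_apply_single f g n

theorem ref_ind {G N : Type} [AddCommGroup N] (p : Ref G N → Prop) (h0 : p 0)
    (hadd : ∀ x y, p x → p y → p (x + y)) (hh : ∀ g n, p (sgl g n)) (x : Ref G N) : p x :=
  Finsupp.induction_linear (motive := p) x h0 hadd hh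

theorem ref_ext {G N M : Type} [AddCommGroup N] [AddCommGroup M] {f f' : Ref G N →+ M}
    (h : ∀ g n, f (sgl g n) = f' (sgl g n)) : f = f' := by
  ext x
  exact ref_ind (fun x => f x = f' x) (by simp) (by intro x y hx hy; simp [hx, hy]) h x

/-- The grading on the synonym. -/
noncomputable def refGr {G N : Type} [AddCommGroup N] (g : G) : AddSubgroup (Ref G N) := (sgl g).range

theorem ref_internal {G N : Type} [AddCommGroup N] :
    (letI := Classical.decEq G; DirectSum.IsInternal (refGr : G → AddSubgroup (Ref G N))) := by
  classical
  refine internal_of _ (lft (fun g => (singleAddHom g).comp (sgl g))) ?_ ?_ ?_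
  · intro m g
    refine ref_ind (fun m => lft (fun g => (singleAddHom g).comp (sgl g)) m g ∈ refGr g)
      ?_ ?_ ?_ m
    · simp
    · intro x y hx hy
      simp only [map_add, Finsupp.add_apply]
      exact add_mem hx hy
    · intro g' n
      rw [lft_sgl]
      simp only [AddMonoidHom.comp_apply, singleAddHom_apply]
      rw [Finsupp.single_apply]; split_ifs with h
      · subst h; exact ⟨n, rfl⟩
      · exact zero_mem _
  · rintro g _ ⟨n, rfl⟩
    rw [lft_sgl]; rfl
  · intro m
    refine ref_ind (fun m => (lft (fun g => (singleAddHom g).comp (sgl g)) m).sum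
      (fun _ x => x) = m) ?_ ?_ ?_ m
    · simp
    · intro x y hx hy
      rw [map_add, Finsupp.sum_add_index' (fun _ => rfl) (fun _ _ _ => rfl), hx, hy]
    · intro g' n
      rw [lft_sgl]
      simp

theorem exists_module {G R N : Type} [AddCommGroup G] [CommRing R] (𝒜 : G → AddSubgroup R)
    (hA : IsGradedRing 𝒜) [AddCommGroup N] [Module R N] :
    ∃ _ : Module R (Ref G N), ∀ g, ∀ r ∈ 𝒜 g, ∀ g' (n : N), r • sgl g' n = sgl (g + g') (r • n) := by
  letI := Classical.decEq G
  obtain ⟨h1, hm, hi⟩ := hA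
  haveI : SetLike.GradedMonoid 𝒜 := { one_mem := h1, mul_mem := fun {_ _ _ _} ha hb => hm ha hb }
  letI : DirectSum.Decomposition 𝒜 := hi.chooseDecomposition
  letI : GradedRing 𝒜 := { }
  let act : ∀ g, 𝒜 g →+ AddMonoid.End (Ref G N) := fun g =>
    { toFun := fun a => lft (fun g' => (sgl (g + g')).comp (DistribSMul.toAddMonoidHom N (a : R)))
      map_zero' := by
        refine ref_ext ?_
        intro g n; rw [lft_sgl]; simp; rfl
      map_add' := by
        intro x y
        refine ref_ext ?_
        intro g' n
        change _ = lft (fun g' => (sgl (g + g')).comp (DistribSMul.toAddMonoidHom N (x : R)))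
          (sgl g' n) + lft (fun g' => (sgl (g + g')).comp
            (DistribSMul.toAddMonoidHom N (y : R))) (sgl g' n)
        rw [lft_sgl, lft_sgl, lft_sgl]; simp [add_smul] }
  have hact : ∀ g (a : 𝒜 g) g' (n : N), act g a (sgl g' n) = sgl (g + g') ((a : R) • n) := by
    intro g a g' n
    exact lft_sgl _ _ _
  let Φ : (⨁ g, 𝒜 g) →+* AddMonoid.End (Ref G N) := DirectSum.toSemiring act
    (by
      refine ref_ext ?_
      intro g n
      refine (hact _ _ _ _).trans ?_
      simp [SetLike.coe_gOne]; rfl)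
    (by
      intro i j a b
      refine ref_ext ?_
      intro g n
      refine (hact _ _ _ _).trans ?_
      change _ = act i a (act j b (sgl g n))
      rw [hact, hact, add_assoc, ← mul_smul]; rfl)
  let Ψ : R →+* AddMonoid.End (Ref G N) := Φ.comp (DirectSum.decomposeRingEquiv 𝒜).toRingHom
  letI : Module R (Ref G N) := Module.compHom (Ref G N) Ψ
  refine ⟨inferInstance, ?_⟩
  intro g r hr g' n
  change Φ (DirectSum.decompose 𝒜 r) (sgl g' n) = _
  rw [DirectSum.decompose_of_mem 𝒜 hr]
  have hΦ : Φ (DirectSum.of (fun g => 𝒜 g) g ⟨r, hr⟩) = act g ⟨r, hr⟩ :=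
    DirectSum.toSemiring_of _ _ _ _ _
  exact (DFunLike.congr_fun hΦ _).trans (hact _ _ _ _)

theorem lin_of {G H R P M : Type} [CommRing R] [AddCommGroup P] [Module R P]
    [AddCommGroup M] [Module R M] {𝒜 : G → AddSubgroup R} {𝒬 : H → AddSubgroup P}
    (hA : letI := Classical.decEq G; DirectSum.IsInternal 𝒜)
    (hP : letI := Classical.decEq H; DirectSum.IsInternal 𝒬) (φ : P →+ M)
    (h : ∀ g, ∀ r ∈ 𝒜 g, ∀ h, ∀ p ∈ 𝒬 h, φ (r • p) = r • φ p) :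
    ∃ φ' : P →ₗ[R] M, ∀ p, φ' p = φ p := by
  refine ⟨{ φ with map_smul' := ?_ }, fun _ => rfl⟩
  intro r p
  change φ (r • p) = r • φ p
  refine hom_ind hA (fun r => φ (r • p) = r • φ p) (by simp) ?_ ?_ r
  · intro x y hx hy; simp [add_smul, hx, hy]
  · intro g r hr
    refine hom_ind hP (fun p => φ (r • p) = r • φ p) (by simp) ?_ ?_ p
    · intro x y hx hy; simp [smul_add, hx, hy]
    · exact fun h' p hp => h g r hr h' p hp

theorem forward {G H : Type} [AddCommGroup G] [AddCommGroup H]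
    (ψ : G →+ H) (hψ : Function.Surjective ψ) (hfin : Finite ψ.ker)
    (R : Type) [CommRing R] (𝒜 : G → AddSubgroup R) (hA : IsGradedRing 𝒜)
    (M : Type) [AddCommGroup M] [Module R M] (ℳ : G → AddSubgroup M)
    (hM : IsGradedModule 𝒜 ℳ) (hinj : IsInjectiveGradedModule 𝒜 ℳ) :
    IsInjectiveGradedModule (coarsen ψ 𝒜) (coarsen ψ ℳ) := by
  classical
  intro A B _ _ _ _ 𝒮A 𝒮B hSA hSB i hi hgi f hf
  obtain ⟨instA, smA⟩ := exists_module (N := A) 𝒜 hA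
  obtain ⟨instB, smB⟩ := exists_module (N := B) 𝒜 hA
  obtain ⟨D, hD1, hD2, hD3⟩ := exists_dec ℳ hM.2
  obtain ⟨DB, hDB1, hDB2, hDB3⟩ := exists_dec 𝒮B hSB.2
  have hfib : ∀ h, (ψ ⁻¹' {h}).Finite := by
    intro h
    obtain ⟨g0, rfl⟩ := hψ h
    have : (ψ ⁻¹' {ψ g0}) ⊆ (fun x => g0 + x) '' (ψ.ker : Set G) := by
      intro g hg
      refine ⟨g - g0, ?_, by simp⟩
      have : ψ g = ψ g0 := hg
      simp [AddMonoidHom.mem_ker, this]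
    exact (Set.Finite.image _ (Set.toFinite _)).subset this
  let fib : H → Finset G := fun h => (hfib h).toFinset
  have mfib : ∀ h g, g ∈ fib h ↔ ψ g = h := by intro h g; simp [fib]
  have hDsm : ∀ g, ∀ r ∈ 𝒜 g, ∀ g' m, D (r • m) (g + g') = r • D m g' := by
    intro g r hr g' m
    refine hom_ind hM.2 (fun m => D (r • m) (g + g') = r • D m g') (by simp) ?_ ?_ m
    · intro x y hx hy; simp [smul_add, hx, hy]
    · intro g'' m hm
      rw [hD2 _ _ hm, hD2 _ _ (hM.1 hr hm)]
      simp only [single_apply, add_right_inj]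
      split_ifs <;> simp
  obtain ⟨i', hi'⟩ := lin_of (𝒬 := refGr) hA.2.2 (ref_internal (G := G) (N := A))
    (lft (fun g => (sgl g).comp i.toAddMonoidHom) : Ref G A →+ Ref G B) (by
      rintro g r hr h _ ⟨n, rfl⟩
      rw [smA g r hr, lft_sgl, lft_sgl]
      simp [smB g r hr])
  obtain ⟨f', hf'⟩ := lin_of (𝒬 := refGr) hA.2.2 (ref_internal (G := G) (N := A))
    (lft (fun g => (applyAddHom g).comp (D.comp f.toAddMonoidHom)) : Ref G A →+ M) (by
      rintro g r hr h _ ⟨n, rfl⟩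
      rw [smA g r hr, lft_sgl, lft_sgl]
      simp [hDsm g r hr])
  have hi's : ∀ g n, i' (sgl g n) = sgl g (i n) := by
    intro g n; rw [hi', lft_sgl]; rfl
  have hf's : ∀ g n, f' (sgl g n) = D (f n) g := by
    intro g n; rw [hf', lft_sgl]; rfl
  have hi'inj : Function.Injective i' := by
    have key : ∀ x : Ref G A, i' x = (Finsupp.mapRange.addMonoidHom i.toAddMonoidHom : (G →₀ A) →+ (G →₀ B)) x := by
      refine ref_ind _ ?_ ?_ ?_
      · rw [map_zero]
        exact (map_zero (Finsupp.mapRange.addMonoidHom i.toAddMonoidHom : (G →₀ A) →+ (G →₀ B))).symm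
      · intro x y hx hy
        rw [map_add, hx, hy]
        exact (map_add (Finsupp.mapRange.addMonoidHom i.toAddMonoidHom : (G →₀ A) →+ (G →₀ B)) x y).symm
      · intro g n
        rw [hi's]
        exact (Finsupp.mapRange_single (hf := map_zero i)).symm
    intro x y hxy
    rw [key, key] at hxy
    exact Finsupp.mapRange_injective i (map_zero i) hi hxy
  obtain ⟨F, hF, hFc⟩ := hinj (Ref G A) (Ref G B) refGr refGr
    ⟨by rintro g h r _ hr ⟨n, rfl⟩; exact ⟨r • n, (smA g r hr _ _).symm⟩, ref_internal⟩
    ⟨by rintro g h r _ hr ⟨n, rfl⟩; exact ⟨r • n, (smB g r hr _ _).symm⟩, ref_internal⟩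
    i' hi'inj (by rintro g _ ⟨n, rfl⟩; exact ⟨i n, (hi's g n).symm⟩)
    f' (by rintro g _ ⟨n, rfl⟩; rw [hf's]; exact hD1 _ _)
  let k0 : B →+ M := (Finsupp.liftAddHom
    (fun h => ∑ g ∈ fib h, F.toAddMonoidHom.comp (sgl g))).comp DB
  have hk0 : ∀ h, ∀ b ∈ 𝒮B h, k0 b = ∑ g ∈ fib h, F (sgl g b) := by
    intro h b hb
    simp only [k0, AddMonoidHom.comp_apply, hDB2 h b hb]
    rw [Finsupp.liftAddHom_apply_single, AddMonoidHom.finsetSum_apply]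
    rfl
  obtain ⟨k, hk⟩ := lin_of hA.2.2 hSB.2 k0 (by
    intro g r hr h b hb
    rw [hk0 h b hb, hk0 (ψ g + h) _ (hSB.1 (mem_coarsen ψ rfl hr) hb), Finset.smul_sum]
    symm
    refine Finset.sum_bij (fun x _ => g + x) ?_ ?_ ?_ ?_
    · intro x hx; rw [mfib] at *; rw [map_add, hx]
    · intro x _ y _ hxy; exact add_left_cancel hxy
    · intro x hx
      refine ⟨x - g, ?_, by simp⟩
      rw [mfib] at *; rw [map_sub, hx]; simp
    · intro x hx
      rw [← map_smul, smB g r hr])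
  refine ⟨k, ?_, ?_⟩
  · intro h b hb
    rw [hk, hk0 h b hb]
    refine sum_mem ?_
    intro g hg
    exact mem_coarsen ψ ((mfib _ _).1 hg) (hF g _ ⟨b, rfl⟩)
  · ext a
    refine hom_ind hSA.2 (fun a => (k ∘ₗ i) a = f a) (by simp) ?_ ?_ a
    · intro x y hx hy; rw [map_add, map_add, hx, hy]
    · intro h a ha
      rw [LinearMap.comp_apply, hk, hk0 h _ (hgi h a ha)]
      have : ∀ g, F (sgl g (i a)) = D (f a) g := by
        intro g
        rw [← hi's, ← hf's, ← hFc]; rfl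
      simp only [this]
      conv_rhs => rw [← hD3 (f a)]
      symm
      refine Finsupp.sum_of_support_subset _ ?_ _ (by simp)
      intro g hg
      rw [mfib]
      by_contra hne
      exact (Finsupp.mem_support_iff.1 hg) (dec_coarsen ψ D hD2 (hf h a ha) hne)

/-- The trivial grading, concentrated in degree zero. -/
def triv (G : Type) [AddCommGroup G] (M : Type) [AddCommGroup M] (g : G) : AddSubgroup M where
  carrier := {m | g ≠ 0 → m = 0}
  zero_mem' := fun _ => rfl
  add_mem' := fun {x y} hx hy h => by rw [hx h, hy h, add_zero]
  neg_mem' := fun {x} hx h => by rw [hx h, neg_zero]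

theorem mem_triv_zero {G : Type} [AddCommGroup G] {M : Type} [AddCommGroup M] (m : M) :
    m ∈ triv G M 0 := fun h => (h rfl).elim

theorem triv_internal (G : Type) [AddCommGroup G] (M : Type) [AddCommGroup M] :
    (letI := Classical.decEq G; DirectSum.IsInternal (triv G M)) := by
  classical
  refine internal_of _ (singleAddHom 0) ?_ ?_ ?_
  · intro m g hg
    rw [singleAddHom_apply, single_apply, if_neg (Ne.symm hg)]
  · intro g m hm
    rw [singleAddHom_apply]
    by_cases h : g = 0
    · rw [h]
    · rw [hm h]; simp
  · intro m; simp

theorem triv_ring (G : Type) [AddCommGroup G] (R : Type) [CommRing R] :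
    IsGradedRing (triv G R) := by
  refine ⟨mem_triv_zero _, ?_, triv_internal G R⟩
  intro g h a b ha hb hgh
  by_cases h1 : g = 0
  · by_cases h2 : h = 0
    · exact (hgh (by rw [h1, h2, add_zero])).elim
    · rw [hb h2, mul_zero]
  · rw [ha h1, zero_mul]

theorem smul_triv {G : Type} [AddCommGroup G] {R M : Type} [CommRing R] [AddCommGroup M]
    [Module R M] (ℳ : G → AddSubgroup M) (hs : ∀ g, ∀ (r : R), ∀ m ∈ ℳ g, r • m ∈ ℳ g)
    {g h : G} {r : R} {m : M} (hr : r ∈ triv G R g) (hm : m ∈ ℳ h) : r • m ∈ ℳ (g + h) := by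
  by_cases h1 : g = 0
  · subst h1; rw [zero_add]; exact hs _ _ _ hm
  · rw [hr h1, zero_smul]; exact zero_mem _

theorem triv_coarsen {G H : Type} [AddCommGroup G] [AddCommGroup H] (ψ : G →+ H)
    (R : Type) [CommRing R] : coarsen ψ (triv G R) = triv H R := by
  funext h
  apply le_antisymm
  · refine iSup₂_le ?_
    intro g hg m hm h0
    refine hm ?_
    rintro rfl
    exact h0 (by rw [← show ψ 0 = h from hg, map_zero])
  · intro m hm
    by_cases h0 : h = 0
    · subst h0
      exact mem_coarsen ψ (map_zero ψ) (mem_triv_zero m)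
    · rw [hm h0]; exact zero_mem _

theorem self_injective : Module.Injective (ℕ → ℚ) (ℕ → ℚ) := by
  classical
  apply Module.Baer.injective
  intro J g
  let t : ℕ → ℚ := fun n =>
    if h : (Pi.single n 1 : ℕ → ℚ) ∈ J then g ⟨_, h⟩ n else 0
  refine ⟨LinearMap.toSpanSingleton _ _ t, ?_⟩
  intro x hx
  funext n
  have key : g ⟨x, hx⟩ n = ((Pi.single n 1 : ℕ → ℚ) • g ⟨x, hx⟩) n := by simp
  rw [key, ← map_smul]
  by_cases h0 : x n = 0
  · have : (Pi.single n 1 : ℕ → ℚ) • (⟨x, hx⟩ : J) = 0 := by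
      ext k
      by_cases hk : k = n
      · subst hk; simp [h0]
      · simp [hk]
    rw [this]; simp [h0]
  · have he : (Pi.single n 1 : ℕ → ℚ) ∈ J := by
      have : (Pi.single n 1 : ℕ → ℚ) = (Pi.single n (x n)⁻¹ : ℕ → ℚ) * x := by
        ext k
        by_cases hk : k = n
        · subst hk; simp [h0]
        · simp [hk]
      rw [this]
      exact J.mul_mem_left _ hx
    have : (Pi.single n 1 : ℕ → ℚ) • (⟨x, hx⟩ : J) = x • (⟨_, he⟩ : J) := by
      ext k
      simp [mul_comm]
    rw [this, map_smul]
    simp [t, he]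

/-- The standard grading on finitely supported functions. -/
noncomputable def fgr {G M : Type} [AddCommGroup M] (g : G) : AddSubgroup (G →₀ M) :=
  (singleAddHom g).range

theorem fgr_inj {G R E : Type} [AddCommGroup G] [CommRing R] [AddCommGroup E] [Module R E]
    (hE : Module.Injective R E) :
    IsInjectiveGradedModule (triv G R) (fgr : G → AddSubgroup (G →₀ E)) := by
  classical
  intro A B _ _ _ _ 𝒮A 𝒮B hSA hSB i hi hgi f hf
  obtain ⟨DB, hDB1, hDB2, hDB3⟩ := exists_dec 𝒮B hSB.2
  have hsm : ∀ g, ∀ (r : R), ∀ m ∈ 𝒮B g, r • m ∈ 𝒮B g := by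
    intro g r m hm
    have := hSB.1 (mem_triv_zero r) hm
    rwa [zero_add] at this
  choose φ hφ using fun g => hE.out i hi ((Finsupp.lapply g).comp f)
  let k0 : B →+ (G →₀ E) := (Finsupp.liftAddHom
    (fun g => (singleAddHom g).comp (φ g).toAddMonoidHom)).comp DB
  have hk0 : ∀ g, ∀ b ∈ 𝒮B g, k0 b = single g (φ g b) := by
    intro g b hb
    simp only [k0, AddMonoidHom.comp_apply, hDB2 g b hb]
    rw [Finsupp.liftAddHom_apply_single]
    rfl
  obtain ⟨k, hk⟩ := lin_of (triv_internal G R) hSB.2 k0 (by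
    intro _ r _ g b hb
    rw [hk0 _ _ (hsm g r b hb), hk0 _ _ hb, map_smul, Finsupp.smul_single])
  refine ⟨k, ?_, ?_⟩
  · intro g b hb
    rw [hk, hk0 g b hb]
    exact ⟨_, rfl⟩
  · refine LinearMap.ext fun a => ?_
    refine hom_ind hSA.2 (fun a => (k ∘ₗ i) a = f a) (by simp) ?_ ?_ a
    · intro x y hx hy; rw [map_add, map_add, hx, hy]
    · intro g a ha
      rw [LinearMap.comp_apply, hk, hk0 g _ (hgi g a ha), hφ]
      obtain ⟨e, he⟩ := hf g a ha
      rw [← he]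
      simp
      rw [← he]
      simp

theorem fgr_internal {G M : Type} [AddCommGroup M] :
    (letI := Classical.decEq G; DirectSum.IsInternal (fgr : G → AddSubgroup (G →₀ M))) :=
  ref_internal

/-- The ideal of finitely supported sequences. -/
def finI : Ideal (ℕ → ℚ) where
  carrier := {x | (Function.support x).Finite}
  zero_mem' := by simp
  add_mem' := fun {x y} hx hy => (Set.Finite.union hx hy).subset (Function.support_add x y)
  smul_mem' := fun c x hx => Set.Finite.subset hx (Function.support_smul_subset_right c x)

theorem backward {G H : Type} [AddCommGroup G] [AddCommGroup H]
    (ψ : G →+ H) (hinf : Infinite ψ.ker)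
    (hinj : IsInjectiveGradedModule (coarsen ψ (triv G (ℕ → ℚ)))
      (coarsen ψ (fgr : G → AddSubgroup (G →₀ (ℕ → ℚ))))) : False := by
  classical
  let κ : ℕ ↪ ψ.ker := Infinite.natEmbedding _
  let ι : ℕ ↪ G := κ.trans ⟨Subtype.val, Subtype.val_injective⟩
  have hι : ∀ n, ψ (ι n) = 0 := fun n => (κ n).2
  rw [triv_coarsen] at hinj
  let toF : finI → (ℕ →₀ (ℕ → ℚ)) := fun x =>
    Finsupp.ofSupportFinite (fun n => (Pi.single n (x.1 n) : ℕ → ℚ)) (by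
      refine Set.Finite.subset x.2 ?_
      intro n hn h0
      refine hn ?_
      change (Pi.single n (x.1 n) : ℕ → ℚ) = _
      rw [h0]; simp)
  have htoF : ∀ x n, toF x n = (Pi.single n (x.1 n) : ℕ → ℚ) := fun _ _ => rfl
  let toL : finI →ₗ[ℕ → ℚ] (ℕ →₀ (ℕ → ℚ)) :=
    { toFun := toF
      map_add' := by
        intro x y
        ext n : 1
        rw [Finsupp.add_apply, htoF, htoF, htoF, ← Pi.single_add]; rfl
      map_smul' := by
        intro r x
        ext n k
        rw [RingHom.id_apply, Finsupp.smul_apply, htoF, htoF]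
        by_cases hk : k = n
        · subst hk; simp
        · simp [hk] }
  let f : finI →ₗ[ℕ → ℚ] (G →₀ (ℕ → ℚ)) := (Finsupp.lmapDomain _ _ ι).comp toL
  have hf : ∀ x n, f x (ι n) = (Pi.single n (x.1 n) : ℕ → ℚ) := by
    intro x n
    exact Finsupp.mapDomain_apply ι.injective _ _
  have hfm : ∀ x, f x ∈ coarsen ψ (fgr : G → AddSubgroup (G →₀ (ℕ → ℚ))) 0 := by
    intro x
    change Finsupp.mapDomain ι (toL x) ∈ _
    unfold Finsupp.mapDomain
    refine sum_mem ?_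
    intro n _
    exact mem_coarsen ψ (hι n) ⟨_, rfl⟩
  obtain ⟨k, -, hk⟩ := hinj finI (ℕ → ℚ) (triv H _) (triv H _)
    ⟨fun hr hm => smul_triv _ (fun g r m hm h0 => by rw [hm h0, smul_zero]) hr hm,
      triv_internal _ _⟩
    ⟨fun hr hm => smul_triv _ (fun g r m hm h0 => by rw [hm h0, smul_zero]) hr hm,
      triv_internal _ _⟩
    finI.subtype Subtype.val_injective
    (by intro g m hm h0; rw [hm h0]; rfl)
    f (by
      intro h m hm
      by_cases h0 : h = 0
      · subst h0; exact hfm m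
      · rw [hm h0, map_zero]; exact zero_mem _)
  obtain ⟨n, hn⟩ : ∃ n, ι n ∉ (k 1).support := by
    by_contra hcon
    push Not at hcon
    have : (Set.univ : Set ℕ).Finite := by
      refine Set.Finite.subset (((k 1).support.finite_toSet).preimage ι.injective.injOn) ?_
      intro n _
      exact hcon n
    exact Set.infinite_univ this
  have hmem : (Pi.single n 1 : ℕ → ℚ) ∈ finI :=
    Set.Finite.subset (Set.finite_singleton n) (Pi.support_single_subset)
  have h1 := hf ⟨_, hmem⟩ n
  rw [← hk] at h1
  have h2 : (k ∘ₗ finI.subtype) ⟨_, hmem⟩ = (Pi.single n 1 : ℕ → ℚ) • k 1 := by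
    rw [← map_smul]; simp
  rw [h2, Finsupp.smul_apply, Finsupp.notMem_support_iff.1 hn, smul_zero] at h1
  have := congrFun h1 n
  simp at this

end CoarsenAux

/-- **Statement 7** (Theorem 1.80): `ker ψ` is finite if and only if for every `G`-graded
commutative ring `R` the `ψ`-coarsening functor preserves injectivity of graded modules. -/
theorem ker_finite_iff_coarsening_preserves_injectivity
    {G H : Type} [AddCommGroup G] [AddCommGroup H]
    (ψ : G →+ H) (hψ : Function.Surjective ψ) :
    Finite ψ.ker ↔
      ∀ (R : Type) [CommRing R], ∀ 𝒜 : G → AddSubgroup R, IsGradedRing 𝒜 →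
        ∀ (M : Type) [AddCommGroup M] [Module R M], ∀ ℳ : G → AddSubgroup M,
          IsGradedModule 𝒜 ℳ → IsInjectiveGradedModule 𝒜 ℳ →
            IsInjectiveGradedModule (coarsen ψ 𝒜) (coarsen ψ ℳ) := by
  constructor
  · intro hfin R _ 𝒜 hA M _ _ ℳ hM hinj
    exact CoarsenAux.forward ψ hψ hfin R 𝒜 hA M ℳ hM hinj
  · intro h
    by_contra hfin
    rw [not_finite_iff_infinite] at hfin
    refine CoarsenAux.backward ψ hfin (h (ℕ → ℚ) _ (CoarsenAux.triv_ring G _) _ _ ⟨?_, ?_⟩ ?_)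
    · intro g g' r m hr hm
      refine CoarsenAux.smul_triv _ ?_ hr hm
      rintro g r _ ⟨x, rfl⟩
      exact ⟨r • x, (Finsupp.smul_single r g x).symm⟩
    · exact CoarsenAux.fgr_internal
    · exact CoarsenAux.fgr_inj CoarsenAux.self_injective
end

section
/- Let G be an additive commutative group, R a G-graded commutative ring, and M a G-graded R-module. Suppose there exists an infinite subgroup F ⊆ G such that, denoting by π: G → G/F the canonical projection, the natural transformation h_π^M is an isomorphism. Then for every additive commutative group H and every surjective group homomorphism ψ: G → H, the natural transformation h_ψ^M is an isomorphism; in particular h_0^M (for the projection G → 0) is an isomorphism. -/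
/-!
Common vocabulary: internally graded rings and modules, coarsening of gradings,
graded morphisms, and derived notions (injectivity, cogenerators, smallness, ...),
following Rohrer, "Coarsenings, injectives and Hom functors".
-/

open DirectSum

section Helpers

open Classical in
lemma aux_proj {G N : Type} [AddCommGroup N] (𝒩 : G → AddSubgroup N)
    (h : DirectSum.IsInternal 𝒩) :
    ∃ p : G → N →+ N, (∀ g x, p g x ∈ 𝒩 g) ∧ (∀ g, ∀ x ∈ 𝒩 g, p g x = x) ∧
      (∀ g k, g ≠ k → ∀ x ∈ 𝒩 k, p g x = 0) ∧ (∀ x, {g | p g x ≠ 0}.Finite) ∧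
      (∀ x, (∀ g, p g x = 0) → x = 0) := by
  let e := AddEquiv.ofBijective (DirectSum.coeAddMonoidHom 𝒩) h
  have he : ∀ g (x : 𝒩 g), e.symm (x : N) = DirectSum.of (fun g => 𝒩 g) g x := by
    intro g x
    rw [AddEquiv.symm_apply_eq]
    exact (DirectSum.coeAddMonoidHom_of 𝒩 g x).symm
  refine ⟨fun g => AddMonoidHom.mk' (fun x => ((e.symm x) g : N)) ?_, ?_, ?_, ?_, ?_, ?_⟩
  · intro a b; simp
  · intro g x; exact (e.symm x g).2
  · intro g x hx
    have := he g ⟨x, hx⟩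
    simp only [AddMonoidHom.mk'_apply]
    simp only at this
    rw [this, DirectSum.of_eq_same]
  · intro g k hgk x hx
    have := he k ⟨x, hx⟩
    simp only [AddMonoidHom.mk'_apply]
    simp only at this
    rw [this, DirectSum.of_eq_of_ne _ _ _ hgk]; rfl
  · intro x
    refine (DFinsupp.finite_support (e.symm x)).subset ?_
    intro g hg h0
    apply hg
    simp only [AddMonoidHom.mk'_apply]
    rw [h0]; rfl
  · intro x hx
    have : e.symm x = 0 := by
      ext g
      simpa using hx g
    simpa using this

open Classical in
lemma aux_lift {G M N : Type} [AddCommGroup M] [AddCommGroup N] (ℳ : G → AddSubgroup M)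
    (h : DirectSum.IsInternal ℳ) (φ : G → M →+ N) :
    ∃ v : M →+ N, ∀ g, ∀ m ∈ ℳ g, v m = φ g m := by
  let e := AddEquiv.ofBijective (DirectSum.coeAddMonoidHom ℳ) h
  refine ⟨(DirectSum.toAddMonoid fun g => (φ g).comp (ℳ g).subtype).comp
    e.symm.toAddMonoidHom, ?_⟩
  intro g m hm
  have : e.symm m = DirectSum.of (fun g => ℳ g) g ⟨m, hm⟩ := by
    rw [AddEquiv.symm_apply_eq]
    exact (DirectSum.coeAddMonoidHom_of ℳ g ⟨m, hm⟩).symm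
  simp [this]

open Classical in
lemma aux_ind {G M : Type} [AddCommGroup M] (ℳ : G → AddSubgroup M)
    (h : DirectSum.IsInternal ℳ) {P : M → Prop} (h0 : P 0)
    (hadd : ∀ x y, P x → P y → P (x + y)) (hh : ∀ g, ∀ x ∈ ℳ g, P x) (x : M) : P x := by
  obtain ⟨y, rfl⟩ := h.2 x
  induction y using DirectSum.induction_on with
  | zero => simpa using h0
  | of g y => rw [DirectSum.coeAddMonoidHom_of]; exact hh g _ y.2
  | add a b ha hb => rw [map_add]; exact hadd _ _ ha hb

lemma aux_proj_smul {G R N : Type} [AddCommGroup G] [CommRing R] [AddCommGroup N] [Module R N]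
    {𝒜 : G → AddSubgroup R} {𝒩 : G → AddSubgroup N} (h : IsGradedModule 𝒜 𝒩)
    (p : G → N →+ N) (p1 : ∀ g, ∀ x ∈ 𝒩 g, p g x = x)
    (p0 : ∀ g k, g ≠ k → ∀ x ∈ 𝒩 k, p g x = 0) (a c : G) (r : R) (hr : r ∈ 𝒜 a) (x : N) :
    p (a + c) (r • x) = r • p c x := by
  refine aux_ind 𝒩 h.2 (P := fun x => p (a + c) (r • x) = r • p c x) ?_ ?_ ?_ x
  · simp
  · intro x y hx hy; rw [smul_add, map_add, map_add, hx, hy, smul_add]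
  · intro k x hx
    by_cases hk : c = k
    · subst hk
      rw [p1 _ _ hx, p1 _ _ (h.1 hr hx)]
    · rw [p0 _ _ hk x hx, p0 _ _ _ _ (h.1 hr hx), smul_zero]
      simpa using hk

/-- The homogeneous components of a linear map. -/
lemma aux_comp {G R M N : Type} [AddCommGroup G] [CommRing R] [AddCommGroup M] [Module R M]
    [AddCommGroup N] [Module R N]
    {𝒜 : G → AddSubgroup R} (h𝒜 : IsGradedRing 𝒜)
    {ℳ : G → AddSubgroup M} (hℳ : IsGradedModule 𝒜 ℳ)
    {𝒩 : G → AddSubgroup N} (h : IsGradedModule 𝒜 𝒩)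
    (p : G → N →+ N) (p1 : ∀ g, ∀ x ∈ 𝒩 g, p g x = x)
    (p0 : ∀ g k, g ≠ k → ∀ x ∈ 𝒩 k, p g x = 0) (u : M →ₗ[R] N) (g : G) :
    ∃ v : M →ₗ[R] N, ∀ g', ∀ m ∈ ℳ g', v m = p (g + g') (u m) := by
  obtain ⟨v, hv⟩ := aux_lift ℳ hℳ.2 (fun g' => (p (g + g')).comp u.toAddMonoidHom)
  refine ⟨{ v with map_smul' := ?_ }, hv⟩
  intro r m
  change v (r • m) = r • v m
  refine aux_ind 𝒜 h𝒜.2.2 (P := fun r => v (r • m) = r • v m) ?_ ?_ ?_ r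
  · simp
  · intro x y hx hy; rw [add_smul, map_add, hx, hy, add_smul]
  intro a r hr
  refine aux_ind ℳ hℳ.2 (P := fun m => v (r • m) = r • v m) ?_ ?_ ?_ m
  · simp
  · intro x y hx hy; rw [smul_add, map_add, map_add, hx, hy, smul_add]
  intro b m hm
  rw [hv _ _ hm, hv _ _ (hℳ.1 hr hm)]
  change p (g + (a + b)) (u (r • m)) = r • p (g + b) (u m)
  rw [map_smul, ← aux_proj_smul h p p1 p0 a (g + b) r hr]
  congr 2; abel

/-- Grading on the sum of countably many shifts of a graded module. -/
def auxGrading {G N : Type} [AddCommGroup G] [AddCommGroup N] (𝒩 : G → AddSubgroup N)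
    (d : ℕ → G) (g : G) : AddSubgroup (ℕ →₀ N) where
  carrier := {x | ∀ n, x n ∈ 𝒩 (g + d n)}
  zero_mem' := fun n => by simp
  add_mem' := fun {x y} hx hy n => by
    rw [Finsupp.add_apply]; exact add_mem (hx n) (hy n)
  neg_mem' := fun {x} hx n => by
    rw [Finsupp.neg_apply]; exact neg_mem (hx n)

lemma auxGrading_graded {G R N : Type} [AddCommGroup G] [CommRing R] [AddCommGroup N]
    [Module R N] {𝒜 : G → AddSubgroup R} {𝒩 : G → AddSubgroup N} (h : IsGradedModule 𝒜 𝒩)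
    (d : ℕ → G) : IsGradedModule 𝒜 (auxGrading 𝒩 d) := by
  classical
  obtain ⟨p, pm, p1, p0, -, -⟩ := aux_proj 𝒩 h.2
  refine ⟨?_, ?_⟩
  · intro g k r m hr hm n
    rw [Finsupp.smul_apply, add_assoc]
    exact h.1 hr (hm n)
  · letI := Classical.decEq G
    constructor
    · rw [injective_iff_map_eq_zero]
      intro x hx
      have key : ∀ (x : ⨁ g, auxGrading 𝒩 d g) (g : G) (n : ℕ),
          p (g + d n) ((DirectSum.coeAddMonoidHom (auxGrading 𝒩 d) x) n) = (x g : ℕ →₀ N) n := by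
        intro x g n
        induction x using DirectSum.induction_on with
        | zero => simp
        | of k y =>
          rw [DirectSum.coeAddMonoidHom_of]
          by_cases hk : g = k
          · subst hk
            rw [DirectSum.of_eq_same, p1 _ _ (y.2 n)]
          · rw [DirectSum.of_eq_of_ne _ _ _ hk, p0 _ (k + d n) _ _ (y.2 n)]
            · rfl
            · simpa using hk
        | add a b ha hb => 
          rw [map_add, Finsupp.add_apply, map_add, ha, hb]; rfl
      ext g n
      rw [← key, hx]; simp
    · intro x
      induction x using Finsupp.induction_linear with
      | zero => exact ⟨0, map_zero _⟩
      | add a b ha hb =>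
        obtain ⟨a, rfl⟩ := ha
        obtain ⟨b, rfl⟩ := hb
        exact ⟨a + b, map_add _ _ _⟩
      | single n y =>
        refine aux_ind 𝒩 h.2 (P := fun y => ∃ a, DirectSum.coeAddMonoidHom (auxGrading 𝒩 d) a
          = Finsupp.single n y) ⟨0, by simp⟩ ?_ ?_ y
        · rintro x y ⟨a, ha⟩ ⟨b, hb⟩
          exact ⟨a + b, by rw [map_add, ha, hb, Finsupp.single_add]⟩
        · intro k y hy
          refine ⟨DirectSum.of (fun g => auxGrading 𝒩 d g) (k - d n) ⟨Finsupp.single n y, ?_⟩,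
            DirectSum.coeAddMonoidHom_of _ _ _⟩
          intro j
          by_cases hj : n = j
          · subst hj; simpa using hy
          · rw [Finsupp.single_eq_of_ne (Ne.symm hj)]; exact zero_mem _

end Helpers

/-- **Statement 17** (Corollary 2.80): if there is an infinite subgroup `F ⊆ G` such that
`h_π^M` is an isomorphism for the canonical projection `π : G → G/F`, then `h_ψ^M` is an
isomorphism for every epimorphism `ψ : G → H`; here, as in Statement 16, the claim that
`h_ψ^M` is an isomorphism is expressed by the equality of the subgroups
`⨆_{g : G} Hom(M, N(g))` and `⨆_{h : H} Hom(M_[ψ], N_[ψ](h))` of `M →ₗ[R] N` for every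
`G`-graded `R`-module `N`. In particular (taking `H = 0`) `h_0^M` is an isomorphism. -/
theorem gradedHom_coarsening_iso_of_iso_for_infinite_kernel
    {G R M : Type} [AddCommGroup G] [CommRing R] [AddCommGroup M] [Module R M]
    (𝒜 : G → AddSubgroup R) (h𝒜 : IsGradedRing 𝒜)
    (ℳ : G → AddSubgroup M) (hℳ : IsGradedModule 𝒜 ℳ)
    (F : AddSubgroup G) (hF : Infinite F)
    (hπ : ∀ (N : Type) [AddCommGroup N] [Module R N], ∀ 𝒩 : G → AddSubgroup N,
      IsGradedModule 𝒜 𝒩 →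
        (⨆ g : G, gradedHomSubgroup (R := R) ℳ 𝒩 g)
          = ⨆ h : G ⧸ F, gradedHomSubgroup (R := R)
              (coarsen (QuotientAddGroup.mk' F) ℳ) (coarsen (QuotientAddGroup.mk' F) 𝒩) h) :
    ∀ (H : Type) [AddCommGroup H], ∀ ψ : G →+ H, Function.Surjective ψ →
      ∀ (N : Type) [AddCommGroup N] [Module R N], ∀ 𝒩 : G → AddSubgroup N,
        IsGradedModule 𝒜 𝒩 →
          (⨆ g : G, gradedHomSubgroup (R := R) ℳ 𝒩 g)
            = ⨆ h : H, gradedHomSubgroup (R := R) (coarsen ψ ℳ) (coarsen ψ 𝒩) h := by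
  classical
  intro H _ ψ _ N _ _ 𝒩 h𝒩
  apply le_antisymm
  · refine iSup_le fun g => le_trans ?_ (le_iSup _ (ψ g))
    intro u hu k m hm
    have : coarsen ψ ℳ k ≤ (coarsen ψ 𝒩 (ψ g + k)).comap u.toAddMonoidHom := by
      refine iSup₂_le fun g' hg' m hm => ?_
      have hle : 𝒩 (g + g') ≤ coarsen ψ 𝒩 (ψ g + k) :=
        le_iSup₂_of_le (g + g') (by
          have : ψ g' = k := hg'
          simp [this]) le_rfl
      exact hle (hu g' m hm)
    exact this hm
  intro u _
  obtain ⟨p, pm, p1, p0, pfin, pinj⟩ := aux_proj 𝒩 h𝒩.2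
  choose v hv using fun g => aux_comp h𝒜 hℳ h𝒩 p p1 p0 u g
  have hv0 : ∀ m, {g | v g m ≠ 0}.Finite := by
    refine aux_ind ℳ hℳ.2 (by simp) ?_ ?_
    · intro x y hx hy
      refine (hx.union hy).subset ?_
      intro g hg
      by_contra hcon
      simp only [Set.mem_union, Set.mem_setOf_eq, not_or, not_not] at hcon
      exact hg (by rw [map_add, hcon.1, hcon.2, add_zero])
    · intro g' m hm
      refine ((pfin (u m)).preimage (f := fun g => g + g')
        (add_left_injective g').injOn).subset ?_
      intro g hg
      change p (g + g') (u m) ≠ 0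
      rw [← hv g g' m hm]; exact hg
  have hfin : {g | v g ≠ 0}.Finite := by
    by_contra hS
    have hS : {g | v g ≠ 0}.Infinite := hS
    let e : ℕ ↪ {g | v g ≠ 0} := hS.natEmbedding
    let f : ℕ ↪ F := Infinite.natEmbedding F
    have hwfin : ∀ m, {n | v (e n) m ≠ 0}.Finite := fun m =>
      (hv0 m).preimage (f := fun n => ((e n : {g | v g ≠ 0}) : G))
        (Subtype.val_injective.comp e.injective).injOn
    let w : M →ₗ[R] (ℕ →₀ N) :=
      { toFun := fun m => Finsupp.ofSupportFinite (fun n => v (e n) m) (hwfin m)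
        map_add' := fun a b => by ext n; exact map_add (v (e n)) a b
        map_smul' := fun r a => by ext n; exact map_smul (v (e n)) r a }
    have hw : ∀ m n, w m n = v (e n) m := fun m n => rfl
    let d : ℕ → G := fun n => (e n : G) - (f n : G)
    have hN' := hπ (ℕ →₀ N) (auxGrading 𝒩 d) (auxGrading_graded h𝒩 d)
    have hwmem : w ∈ ⨆ g : G, gradedHomSubgroup (R := R) ℳ (auxGrading 𝒩 d) g := by
      rw [hN']
      refine (le_iSup (fun h : G ⧸ F => gradedHomSubgroup (R := R)
              (coarsen (QuotientAddGroup.mk' F) ℳ)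
              (coarsen (QuotientAddGroup.mk' F) (auxGrading 𝒩 d)) h) 0) ?_
      intro k m hm
      rw [zero_add]
      have : coarsen (QuotientAddGroup.mk' F) ℳ k ≤
          (coarsen (QuotientAddGroup.mk' F) (auxGrading 𝒩 d) k).comap w.toAddMonoidHom := by
        refine iSup₂_le fun g' hg' m hm => ?_
        change w m ∈ coarsen (QuotientAddGroup.mk' F) (auxGrading 𝒩 d) k
        rw [← Finsupp.sum_single (w m)]
        refine sum_mem fun n _ => ?_
        have hle : auxGrading 𝒩 d (g' + f n) ≤
            coarsen (QuotientAddGroup.mk' F) (auxGrading 𝒩 d) k :=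
          le_iSup₂_of_le (g' + (f n : G)) (by
            have h1 : QuotientAddGroup.mk' F g' = k := hg'
            have h2 : QuotientAddGroup.mk' F (f n : G) = 0 :=
              (QuotientAddGroup.eq_zero_iff _).2 (f n).2
            rw [Set.mem_preimage, map_add, h1, h2, add_zero]; rfl) le_rfl
        apply hle
        intro j
        by_cases hj : n = j
        · subst hj
          rw [Finsupp.single_eq_same, hw, hv _ g' m hm]
          have : g' + (f n : G) + d n = (e n : G) + g' := by simp only [d]; abel
          rw [this]
          exact pm _ _
        · rw [Finsupp.single_eq_of_ne (Ne.symm hj)]; exact zero_mem _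
      exact this hm
    have hT : ∃ T : Finset G, ∀ n, (f n : G) ∉ T → ∀ g', ∀ m ∈ ℳ g',
        p ((e n : G) + g') (w m n) = 0 := by
      refine AddSubgroup.iSup_induction _ (C := fun w : M →ₗ[R] (ℕ →₀ N) =>
        ∃ T : Finset G, ∀ n, (f n : G) ∉ T → ∀ g', ∀ m ∈ ℳ g',
        p ((e n : G) + g') (w m n) = 0) hwmem ?_ ?_ ?_
      · intro k x hx
        refine ⟨{k}, fun n hn g' m hm => p0 _ _ ?_ _ (hx g' m hm n)⟩
        intro heq
        apply hn
        rw [Finset.mem_singleton]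
        have h2 : (e n : G) + g' = k + g' + ((e n : G) - (f n : G)) := heq
        have h3 : (f n : G) - k = ((e n : G) + g') - (k + g' + ((e n : G) - (f n : G))) := by
          abel
        rw [← h2, sub_self] at h3
        exact sub_eq_zero.1 h3
      · exact ⟨∅, by simp⟩
      · rintro x y ⟨T, hT⟩ ⟨T', hT'⟩
        refine ⟨T ∪ T', fun n hn g' m hm => ?_⟩
        rw [Finset.mem_union, not_or] at hn
        rw [LinearMap.add_apply, Finsupp.add_apply, map_add, hT n hn.1 g' m hm,
          hT' n hn.2 g' m hm, add_zero]
    obtain ⟨T, hT⟩ := hT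
    obtain ⟨n, hn⟩ : ∃ n, (f n : G) ∉ T := by
      by_contra hcon
      push Not at hcon
      refine Set.infinite_range_of_injective (f := fun n => (f n : G))
        (Subtype.val_injective.comp f.injective) (T.finite_toSet.subset ?_)
      rintro _ ⟨n, rfl⟩
      exact hcon n
    apply (e n).2
    refine LinearMap.ext fun m => ?_
    rw [LinearMap.zero_apply]
    refine aux_ind ℳ hℳ.2 (P := fun m => v (e n) m = 0) (map_zero _) ?_ ?_ m
    · intro x y hx hy; rw [map_add, hx, hy, add_zero]
    · intro g' m hm
      have h1 := hT n hn g' m hm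
      rw [hw, hv _ g' m hm, p1 _ _ (pm _ _)] at h1
      rw [hv _ g' m hm, h1]
  have hu : u = ∑ g ∈ hfin.toFinset, v g := by
    refine LinearMap.ext fun m => ?_
    refine aux_ind ℳ hℳ.2 (P := fun m => u m = (∑ g ∈ hfin.toFinset, v g) m)
      (by simp) ?_ ?_ m
    · intro x y hx hy; rw [map_add, map_add, hx, hy]
    intro g' m hm
    rw [← sub_eq_zero]
    apply pinj
    intro k
    rw [map_sub, sub_eq_zero, LinearMap.sum_apply, map_sum, Finset.sum_eq_single (k - g')]
    · rw [hv _ g' m hm, sub_add_cancel, p1 _ _ (pm _ _)]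
    · intro g _ hg
      rw [hv _ g' m hm]
      refine p0 _ _ ?_ _ (pm _ _)
      rintro rfl
      simp at hg
    · intro hk
      have : v (k - g') = 0 := by simpa using hk
      rw [this]; simp
  rw [hu]
  refine sum_mem fun g _ => ?_
  refine (le_iSup (fun g => gradedHomSubgroup (R := R) ℳ 𝒩 g) g) ?_
  intro g' m hm
  rw [hv g g' m hm]
  exact pm _ _
end
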